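/- arXiv:2410.24088 — 3 statements merged into one kernel-verified Lean document; each statement's English description precedes it below -/
import Mathlib

section
/- Let p be a prime, n ∈ ℕ, and a₁,…,a_n ∈ ℂ_p. Then there exists a constant c > 0 such that for all roots of unity ζ₁,…,ζ_n in ℂ_p, either Σ_{i=1}^n ζ_i·a_i = 0 or |Σ_{i=1}^n ζ_i·a_i|_p ≥ c. -/
/-!
We may assume that `K` is complete. A root of unity is the product of one of order prime to `p`
and one of order a power of `p`.

Let `k` be the field of elements of the tilt of `K` that are algebraic over `𝔽_p`. The roots of
unity of order prime to `p` are the images of Teichmüller representatives under a ring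
homomorphism `W(k) → K`. For fixed coefficients in `W(k)`, the Witt coordinates of `∑ [xᵢ] bᵢ` are
polynomials in the `xᵢ`, and since `k[x]` is Noetherian, finitely many of them cut out the zero
locus of all of them; hence a sum which is divisible by a large power of `p` vanishes.

Over the image `F` of the fraction field of `W(k)`, adjoining roots of unity of `p`-power order
gives totally ramified extensions `F_M = F(μ_{p^M})`, so coordinates of an element of `F_{M+r}` in
the basis `1, ω, …, ω^(p^r - 1)` over `F_M` are bounded by `|p|⁻¹` times its norm. When the
coefficients are approximated by elements of `F_M`, a small sum thus splits into small subsums,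
one for each coset of `μ_{p^M}`. If there are several cosets, induction on the number of terms
applies; if there is only one, the form is, up to a unit, one of finitely many at roots of unity
of order prime to `p`.

Arbitrary coefficients reduce to coefficients in a closed subfield containing the roots of unity
by taking coordinates in their finite-dimensional span.
-/

namespace TateVoloch

open Filter Polynomial Topology
open scoped Pointwise

section HasGap

variable {ι 𝕜 E : Type*}

/-- The linear form with coefficients `a i`, `i ∈ I`, has a gap at `0` over `U` if its nonzero
values at points with coordinates in `U` stay away from `0`. The neighbourhood formulation is
equivalent to a lower bound on norms, see `hasGap_iff`. -/
def HasGap [TopologicalSpace E] [AddCommMonoid E] [SMul 𝕜 E]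
    (I : Finset ι) (U : Set 𝕜) (a : ι → E) : Prop :=
  ∀ᶠ x in 𝓝 (0 : E), ∀ ζ : ι → 𝕜, (∀ i ∈ I, ζ i ∈ U) → ∑ i ∈ I, ζ i • a i = x → x = 0

theorem hasGap_iff [NormedAddCommGroup E] [SMul 𝕜 E] {I : Finset ι} {U : Set 𝕜} {a : ι → E} :
    HasGap I U a ↔ ∃ c : ℝ, 0 < c ∧ ∀ ζ : ι → 𝕜, (∀ i ∈ I, ζ i ∈ U) →
      ∑ i ∈ I, ζ i • a i = 0 ∨ c ≤ ‖∑ i ∈ I, ζ i • a i‖ := by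
  simp only [HasGap, Metric.eventually_nhds_iff, dist_zero_right]
  refine exists_congr fun c => and_congr_right fun _ => ⟨fun h ζ hζ => ?_, ?_⟩
  · exact or_iff_not_imp_right.2 fun hc => h (not_le.1 hc) ζ hζ rfl
  · rintro h x hx ζ hζ rfl
    exact (h ζ hζ).resolve_right (not_le.2 hx)

theorem HasGap.mono [TopologicalSpace E] [AddCommMonoid E] [SMul 𝕜 E] {I : Finset ι}
    {U V : Set 𝕜} {a : ι → E} (h : HasGap I V a) (hUV : U ⊆ V) : HasGap I U a :=
  Eventually.mono h fun _ hx ζ hζ => hx ζ fun i hi => hUV (hζ i hi)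

theorem HasGap.of_const_mul {K : Type*} [NormedField K] {I : Finset ι} {U : Set K} {a : ι → K}
    {c : K} (hc : c ≠ 0) (h : HasGap I U fun i => c * a i) : HasGap I U a := by
  refine ((continuous_const_mul c).tendsto' 0 0 (mul_zero c)).eventually h |>.mono ?_
  intro x hx ζ hζ hsum
  refine (mul_eq_zero.1 (hx ζ hζ ?_)).resolve_left hc
  rw [← hsum, Finset.mul_sum]
  exact Finset.sum_congr rfl fun i _ => mul_left_comm _ _ _

theorem HasGap.of_map {R S : Type*} [Semiring R] [Semiring S] [TopologicalSpace R]
    [TopologicalSpace S] {f : R →+* S} (hf : Continuous f) (hf' : Function.Injective f)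
    {I : Finset ι} {U : Set R} {V : Set S} (hUV : Set.MapsTo f U V) {a : ι → R}
    (h : HasGap I V fun i => f (a i)) : HasGap I U a := by
  refine (hf.tendsto' 0 0 (map_zero f)).eventually h |>.mono fun x hx ζ hζ hsum => ?_
  refine (map_eq_zero_iff f hf').1 <| hx (fun i => f (ζ i)) (fun i hi => hUV (hζ i hi)) ?_
  simp only [← hsum, map_sum, smul_eq_mul, map_mul]

/-- Gaps over scalars propagate to vectors: on the finite-dimensional span of the coefficients
the coordinate functionals are continuous and jointly injective. -/
theorem HasGap.of_forall_scalar [Finite ι] [NontriviallyNormedField 𝕜] [CompleteSpace 𝕜]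
    [NormedAddCommGroup E] [NormedSpace 𝕜 E] {I : Finset ι} {U : Set 𝕜}
    (h : ∀ b : ι → 𝕜, HasGap I U b) (a : ι → E) : HasGap I U a := by
  let V := Submodule.span 𝕜 (Set.range a)
  have : FiniteDimensional 𝕜 V := FiniteDimensional.span_of_finite 𝕜 (Set.finite_range a)
  let a' : ι → V := fun i => ⟨a i, Submodule.subset_span ⟨i, rfl⟩⟩
  let b := Module.finBasis 𝕜 V
  let f := fun j => LinearMap.toContinuousLinearMap (b.coord j)
  have gap_coord (j) : ∀ᶠ v in 𝓝 (0 : V), ∀ ζ : ι → 𝕜, (∀ i ∈ I, ζ i ∈ U) →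
      ∑ i ∈ I, ζ i • f j (a' i) = f j v → f j v = 0 :=
    (f j).continuous.tendsto' 0 0 (map_zero _) |>.eventually (h fun i => f j (a' i))
  have gap_V := eventually_all.2 gap_coord
  rw [nhds_induced, eventually_comap] at gap_V
  filter_upwards [gap_V] with x hx ζ hζ hsum
  have hsum' : ((∑ i ∈ I, ζ i • a' i : V) : E) = x := by simpa [a'] using hsum
  have hzero : ∑ i ∈ I, ζ i • a' i = 0 := by
    refine b.ext_elem fun j => ?_
    simpa [f] using hx _ hsum' j ζ hζ (by simp only [map_sum, map_smul])
  rw [← hsum', hzero, ZeroMemClass.coe_zero]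

theorem HasGap.of_subfield [Finite ι] {K : Type*} [NormedField K] {F : Subfield K}
    (hF : IsClosed (F : Set K)) (hF' : ∃ x ∈ F, 1 < ‖x‖) [CompleteSpace K] {I : Finset ι}
    {U : Set K} (hU : U ⊆ F) (h : ∀ b : ι → F, HasGap I U fun i => (b i : K)) (a : ι → K) :
    HasGap I U a := by
  obtain ⟨x, hxF, hx⟩ := hF'
  let : NontriviallyNormedField F := { (inferInstance : NormedField F) with
    non_trivial := ⟨⟨x, hxF⟩, hx⟩ }
  let : NormedSpace F K := ⟨fun y z => (norm_mul (y : K) z).le⟩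
  have : CompleteSpace F := hF.completeSpace_coe
  have gap_F (b : ι → F) : HasGap I ((↑) ⁻¹' U : Set F) b :=
    HasGap.of_map (f := F.subtype) continuous_subtype_val Subtype.val_injective
      (Set.mapsTo_preimage _ _) (h b)
  filter_upwards [HasGap.of_forall_scalar gap_F a] with y hy ζ hζ hsum
  have lift (i) : ∃ η : F, i ∈ I → (η : K) = ζ i := by
    by_cases hi : i ∈ I
    exacts [⟨⟨ζ i, hU (hζ i hi)⟩, fun _ => rfl⟩, ⟨0, fun hi' => (hi hi').elim⟩]
  choose η hη using lift
  refine hy η (fun i hi => ?_) ?_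
  · rw [Set.mem_preimage, hη i hi]
    exact hζ i hi
  · rw [← hsum]
    exact Finset.sum_congr rfl fun i hi => by rw [Subfield.smul_def, hη i hi]

theorem HasGap.mul_finite [Finite ι] {K : Type*} [NormedCommRing K] {I : Finset ι}
    {U T : Set K} (hT : T.Finite) (hT' : T.Nonempty) (h : ∀ b : ι → K, HasGap I U b)
    (a : ι → K) : HasGap I (U * T) a := by
  have := hT.to_subtype
  obtain ⟨η₀, hη₀⟩ := hT'
  filter_upwards [eventually_all.2 fun η : ι → T => h fun i => η i * a i] with x hx ζ hζ hsum
  have split (i) : ∃ τ : K, ∃ η : T, i ∈ I → τ ∈ U ∧ τ * η = ζ i := by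
    by_cases hi : i ∈ I
    · obtain ⟨τ, hτ, η, hη, hmul⟩ := hζ i hi
      exact ⟨τ, ⟨η, hη⟩, fun _ => ⟨hτ, hmul⟩⟩
    · exact ⟨0, ⟨η₀, hη₀⟩, fun hi' => (hi hi').elim⟩
  choose τ η hτη using split
  refine hx η τ (fun i hi => (hτη i hi).1) ?_
  rw [← hsum]
  exact Finset.sum_congr rfl fun i hi => by
    rw [smul_eq_mul, smul_eq_mul, ← mul_assoc, (hτη i hi).2]

end HasGap

section NormsInPowers

variable {L K : Type*} [Field L] [NormedField K] [Algebra L K]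

/-- Every nonzero element of `L` has, in `K`, a norm which is an integer power of `ρ`. For
`0 < ρ < 1` this says that `L` is discretely valued with value group contained in `ρ ^ ℤ`. -/
def NormsInPowers (L K : Type*) [Field L] [NormedField K] [Algebra L K] (ρ : ℝ) : Prop :=
  ∀ x : L, x ≠ 0 → ∃ z : ℤ, ‖algebraMap L K x‖ = ρ ^ z

variable [IsUltrametricDist K]

/-- The Eisenstein argument: the nonzero terms of `Q(π)` have norms in different cosets of the
value group `‖π‖ ^ (d ℤ)` of `L`. -/
theorem NormsInPowers.nnnorm_aeval_eq_sup {d : ℕ} {π : K} (hL : NormsInPowers L K (‖π‖ ^ d))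
    (hπ0 : π ≠ 0) (hπ1 : ‖π‖ ≠ 1) {Q : L[X]} (hQ : Q.natDegree < d) :
    ‖aeval π Q‖₊ = Q.support.sup fun l => ‖algebraMap L K (Q.coeff l)‖₊ * ‖π‖₊ ^ l := by
  have hπ : 0 < ‖π‖ := norm_pos_iff.2 hπ0
  have norm_term {l} (hl : l ∈ Q.support) :
      ∃ z : ℤ, ‖algebraMap L K (Q.coeff l) * π ^ l‖ = ‖π‖ ^ (d * z + l) := by
    obtain ⟨z, hz⟩ := hL _ (mem_support_iff.1 hl)
    refine ⟨z, ?_⟩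
    rw [norm_mul, hz, norm_pow, zpow_add₀ hπ.ne', zpow_mul, zpow_natCast, zpow_natCast]
  have lt_d {l} (hl : l ∈ Q.support) : l < d := (le_natDegree_of_mem_supp l hl).trans_lt hQ
  have hne : (Q.support : Set ℕ).Pairwise fun i j =>
      ‖algebraMap L K (Q.coeff i) * π ^ i‖₊ ≠ ‖algebraMap L K (Q.coeff j) * π ^ j‖₊ := by
    intro i hi j hj hij heq
    obtain ⟨y, hy⟩ := norm_term hi
    obtain ⟨z, hz⟩ := norm_term hj
    have hexp : (d * y + i : ℤ) = d * z + j :=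
      zpow_right_injective₀ hπ hπ1 (hy.symm.trans ((congrArg NNReal.toReal heq).trans hz))
    have hdvd : (d : ℤ) ∣ i - j := ⟨z - y, by linear_combination hexp⟩
    have hij' : (i - j : ℤ) ≠ 0 := by omega
    have := Int.natAbs_le_of_dvd_ne_zero hdvd hij'
    have := lt_d hi
    have := lt_d hj
    omega
  rw [aeval_def, eval₂_eq_sum, Polynomial.sum,
    IsUltrametricDist.nnnorm_sum_eq_sup_of_pairwise_ne hne]
  simp only [nnnorm_mul, nnnorm_pow]

theorem NormsInPowers.norm_coeff_mul_pow_le {d : ℕ} {π : K}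
    (hL : NormsInPowers L K (‖π‖ ^ d)) (hπ0 : π ≠ 0) (hπ1 : ‖π‖ ≠ 1) {Q : L[X]}
    (hQ : Q.natDegree < d) (l : ℕ) :
    ‖algebraMap L K (Q.coeff l)‖ * ‖π‖ ^ l ≤ ‖aeval π Q‖ := by
  by_cases hl : l ∈ Q.support
  · have := Finset.le_sup (f := fun l => ‖algebraMap L K (Q.coeff l)‖₊ * ‖π‖₊ ^ l) hl
    rw [← hL.nnnorm_aeval_eq_sup hπ0 hπ1 hQ] at this
    exact_mod_cast this
  · simp [notMem_support_iff.1 hl]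

theorem NormsInPowers.exists_norm_aeval_eq {d : ℕ} {π : K}
    (hL : NormsInPowers L K (‖π‖ ^ d)) (hπ0 : π ≠ 0) (hπ1 : ‖π‖ ≠ 1) {Q : L[X]}
    (hQ : Q.natDegree < d) (hQ0 : aeval π Q ≠ 0) : ∃ z : ℤ, ‖aeval π Q‖ = ‖π‖ ^ z := by
  have hsupp : Q.support.Nonempty :=
    nonempty_support_iff.2 fun h => hQ0 (by rw [h, map_zero])
  obtain ⟨l, hl, hsup⟩ := Finset.exists_mem_eq_sup Q.support hsupp
    fun l => ‖algebraMap L K (Q.coeff l)‖₊ * ‖π‖₊ ^ l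
  obtain ⟨z, hz⟩ := hL _ (mem_support_iff.1 hl)
  refine ⟨d * z + l, ?_⟩
  rw [← coe_nnnorm, hL.nnnorm_aeval_eq_sup hπ0 hπ1 hQ, hsup, NNReal.coe_mul, coe_nnnorm, hz,
    NNReal.coe_pow, coe_nnnorm, zpow_add₀ (norm_ne_zero_iff.2 hπ0), zpow_mul, zpow_natCast,
    zpow_natCast]

end NormsInPowers

theorem norm_algebraMap_coeff_taylor_le {R K : Type*} [CommRing R] [NormedField K]
    [IsUltrametricDist K] [Algebra R K] {r : R} (hr : ‖algebraMap R K r‖ ≤ 1) {P : R[X]} {C : ℝ}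
    (hP : ∀ j, ‖algebraMap R K (P.coeff j)‖ ≤ C) (j : ℕ) :
    ‖algebraMap R K ((taylor r P).coeff j)‖ ≤ C := by
  have hC : 0 ≤ C := (norm_nonneg _).trans (hP 0)
  rw [taylor_coeff, eval_eq_sum_range, map_sum]
  refine IsUltrametricDist.norm_sum_le_of_forall_le_of_nonneg hC fun i _ => ?_
  rw [hasseDeriv_coeff, map_mul, map_mul, map_natCast, map_pow, norm_mul, norm_mul, norm_pow]
  calc _ ≤ 1 * C * 1 := by
        gcongr
        exacts [IsUltrametricDist.norm_natCast_le_one K _, hP _, pow_le_one₀ (norm_nonneg _) hr]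
    _ = C := by ring

theorem aeval_sub_one_taylor {R S : Type*} [CommRing R] [CommRing S] [Algebra R S] (P : R[X])
    (x : S) : aeval (x - 1) (taylor 1 P) = aeval x P := by
  simp [taylor_apply, aeval_comp]

section PrimitiveRoot

variable {K : Type*} [NormedField K] [IsUltrametricDist K]

theorem norm_pow_sub_one_le {x : K} (hx : ‖x‖ ≤ 1) (j : ℕ) : ‖x ^ j - 1‖ ≤ ‖x - 1‖ := by
  rw [← mul_geom_sum, norm_mul]
  refine mul_le_of_le_one_right (norm_nonneg _) ?_
  refine IsUltrametricDist.norm_sum_le_of_forall_le_of_nonneg zero_le_one fun i _ => ?_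
  exact (norm_pow x i).trans_le (pow_le_one₀ (norm_nonneg _) hx)

theorem norm_sub_one_eq_of_isPrimitiveRoot {n : ℕ} [NeZero n] {ω μ : K}
    (hω : IsPrimitiveRoot ω n) (hμ : IsPrimitiveRoot μ n) : ‖μ - 1‖ = ‖ω - 1‖ := by
  have norm_le {ξ η : K} (hξ : IsPrimitiveRoot ξ n) (hη : IsPrimitiveRoot η n) :
      ‖η - 1‖ ≤ ‖ξ - 1‖ := by
    obtain ⟨j, -, rfl⟩ := hξ.eq_pow_of_pow_eq_one hη.pow_eq_one
    exact norm_pow_sub_one_le (hξ.isOfFinOrder (NeZero.ne n)).norm_eq_one.le j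
  exact (norm_le hω hμ).antisymm (norm_le hμ hω)

theorem norm_sub_one_pow_totient {n : ℕ} [NeZero n] {ω : K} (hω : IsPrimitiveRoot ω n) :
    ‖ω - 1‖ ^ n.totient = ‖(cyclotomic n K).eval 1‖ := by
  rw [cyclotomic_eq_prod_X_sub_primitiveRoots hω, eval_prod, norm_prod,
    ← hω.card_primitiveRoots]
  refine (Finset.prod_eq_pow_card fun μ hμ => ?_).symm
  rw [eval_sub, eval_X, eval_C, norm_sub_rev]
  exact norm_sub_one_eq_of_isPrimitiveRoot hω (isPrimitiveRoot_of_mem_primitiveRoots hμ)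

variable {p : ℕ} [Fact p.Prime]

theorem norm_sub_one_pow_totient_prime_pow {m : ℕ} (hm : m ≠ 0) {ω : K}
    (hω : IsPrimitiveRoot ω (p ^ m)) : ‖ω - 1‖ ^ (p ^ m).totient = ‖(p : K)‖ := by
  obtain ⟨m, rfl⟩ := Nat.exists_eq_succ_of_ne_zero hm
  have : NeZero (p ^ (m + 1)) := ⟨pow_ne_zero _ (Fact.out : p.Prime).ne_zero⟩
  rw [norm_sub_one_pow_totient hω, eval_one_cyclotomic_prime_pow]

theorem norm_sub_one_lt_one {m : ℕ} (hm : m ≠ 0) (hp1 : ‖(p : K)‖ < 1) {ω : K}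
    (hω : IsPrimitiveRoot ω (p ^ m)) : ‖ω - 1‖ < 1 := by
  rw [← norm_sub_one_pow_totient_prime_pow hm hω] at hp1
  exact lt_of_not_ge fun h => hp1.not_ge (one_le_pow₀ h)

end PrimitiveRoot

section CyclotomicLayer

/-- The field obtained from `F` by adjoining the roots of unity of order dividing `p ^ M` that
lie in `K`. -/
def cyclotomicLayer (F K : Type*) [Field F] [Field K] [Algebra F K] (p M : ℕ) :
    IntermediateField F K :=
  IntermediateField.adjoin F {ξ : K | ξ ^ p ^ M = 1}

variable {F K : Type*} [Field F] [Field K] [Algebra F K] {p : ℕ}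

theorem mem_cyclotomicLayer {M : ℕ} {ξ : K} (hξ : ξ ^ p ^ M = 1) :
    ξ ∈ cyclotomicLayer F K p M :=
  IntermediateField.subset_adjoin F _ hξ

theorem cyclotomicLayer_mono : Monotone (cyclotomicLayer F K p) := fun _ _ h =>
  IntermediateField.adjoin.mono F _ _ fun _ hξ =>
    orderOf_dvd_iff_pow_eq_one.1 ((orderOf_dvd_of_pow_eq_one hξ).trans (pow_dvd_pow p h))

theorem cyclotomicLayer_eq_adjoin_simple {M : ℕ} (hp : p ≠ 0) {ζ : K}
    (hζ : IsPrimitiveRoot ζ (p ^ M)) :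
    cyclotomicLayer F K p M = IntermediateField.adjoin F {ζ} := by
  have : NeZero (p ^ M) := ⟨pow_ne_zero _ hp⟩
  refine le_antisymm (IntermediateField.adjoin_le_iff.2 fun ξ hξ => ?_) ?_
  · obtain ⟨i, -, rfl⟩ := hζ.eq_pow_of_pow_eq_one hξ
    exact pow_mem (IntermediateField.mem_adjoin_simple_self F ζ) i
  · exact IntermediateField.adjoin.mono F _ _ (Set.singleton_subset_iff.2 hζ.pow_eq_one)

theorem exists_aeval_eq_of_isPrimitiveRoot {n : ℕ} (hn : 1 < n) {ζ : K}
    (hζ : IsPrimitiveRoot ζ n) {x : K} (hx : x ∈ IntermediateField.adjoin F {ζ}) :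
    ∃ Q : F[X], Q.natDegree < n.totient ∧ aeval ζ Q = x := by
  have hroot : aeval ζ (cyclotomic n F) = 0 := by
    rw [← eval_map_algebraMap, map_cyclotomic]
    exact hζ.isRoot_cyclotomic (zero_lt_one.trans hn)
  have hint : IsIntegral F ζ := ⟨_, cyclotomic.monic n F, hroot⟩
  rw [← IntermediateField.mem_toSubalgebra,
    IntermediateField.adjoin_simple_toSubalgebra_of_isAlgebraic hint.isAlgebraic,
    Algebra.adjoin_singleton_eq_range_aeval] at hx
  obtain ⟨Q, rfl⟩ := hx
  refine ⟨Q %ₘ cyclotomic n F, ?_, aeval_modByMonic_eq_self_of_root hroot⟩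
  rw [← natDegree_cyclotomic n F]
  refine natDegree_modByMonic_lt _ (cyclotomic.monic n F) fun h => ?_
  have := natDegree_cyclotomic n F
  rw [h, natDegree_one] at this
  exact (Nat.totient_pos.2 (zero_lt_one.trans hn)).ne this

end CyclotomicLayer

section Ramification

variable {F K : Type*} [Field F] [NormedField K] [IsUltrametricDist K] [Algebra F K]
  {p : ℕ} [Fact p.Prime]

theorem normsInPowers_cyclotomicLayer (hF : NormsInPowers F K ‖(p : K)‖) (hp1 : ‖(p : K)‖ < 1)
    {M : ℕ} (hM : M ≠ 0) {ζ : K} (hζ : IsPrimitiveRoot ζ (p ^ M)) :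
    NormsInPowers (cyclotomicLayer F K p M) K ‖ζ - 1‖ := by
  rintro ⟨x, hx⟩ hx0
  have hprime : p.Prime := Fact.out
  have hpM : 1 < p ^ M := Nat.one_lt_pow hM hprime.one_lt
  rw [cyclotomicLayer_eq_adjoin_simple hprime.ne_zero hζ] at hx
  obtain ⟨Q, hQ, hQx⟩ := exists_aeval_eq_of_isPrimitiveRoot hpM hζ hx
  rw [← norm_sub_one_pow_totient_prime_pow hM hζ] at hF
  rw [← aeval_sub_one_taylor Q ζ] at hQx
  have hx0' : x ≠ 0 := fun h => hx0 (Subtype.ext h)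
  change ∃ z : ℤ, ‖x‖ = ‖ζ - 1‖ ^ z
  rw [← hQx] at hx0' ⊢
  exact hF.exists_norm_aeval_eq (sub_ne_zero.2 (hζ.ne_one hpM))
    (norm_sub_one_lt_one hM hp1 hζ).ne (by rwa [natDegree_taylor]) hx0'

theorem totient_prime_pow_add (p : ℕ) [Fact p.Prime] {M : ℕ} (hM : M ≠ 0) (r : ℕ) :
    (p ^ (M + r)).totient = p ^ r * (p ^ M).totient := by
  obtain ⟨M, rfl⟩ := Nat.exists_eq_succ_of_ne_zero hM
  rw [Nat.succ_add, Nat.totient_prime_pow_succ Fact.out, Nat.totient_prime_pow_succ Fact.out]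
  ring

theorem norm_sub_one_pow_eq {M r : ℕ} (hM : M ≠ 0) {ω : K}
    (hω : IsPrimitiveRoot ω (p ^ (M + r))) : ‖ω - 1‖ ^ p ^ r = ‖ω ^ p ^ r - 1‖ := by
  have hprime : p.Prime := Fact.out
  have hζ : IsPrimitiveRoot (ω ^ p ^ r) (p ^ M) :=
    hω.pow (pow_pos hprime.pos _) (by rw [pow_add, mul_comm])
  have htot : (p ^ M).totient ≠ 0 := (Nat.totient_pos.2 (pow_pos hprime.pos M)).ne'
  refine (pow_left_inj₀ (by positivity) (norm_nonneg _) htot).1 ?_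
  rw [norm_sub_one_pow_totient_prime_pow hM hζ, ← pow_mul, ← totient_prime_pow_add p hM,
    norm_sub_one_pow_totient_prime_pow (by omega) hω]

/-- By `norm_sub_one_pow_eq`, `ω - 1` is an Eisenstein element of degree `p ^ r` over the layer
`M`, and passing between expansions in powers of `ω - 1` and of `ω` preserves integrality. -/
theorem norm_coeff_le_of_isPrimitiveRoot (hF : NormsInPowers F K ‖(p : K)‖)
    (hp1 : ‖(p : K)‖ < 1) {M r : ℕ} (hM : M ≠ 0) {ω : K}
    (hω : IsPrimitiveRoot ω (p ^ (M + r))) {P : (cyclotomicLayer F K p M)[X]}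
    (hP : P.natDegree < p ^ r) (j : ℕ) :
    ‖(P.coeff j : K)‖ ≤ ‖(p : K)‖⁻¹ * ‖aeval ω P‖ := by
  have hprime : p.Prime := Fact.out
  have hMr : M + r ≠ 0 := by omega
  have hL := normsInPowers_cyclotomicLayer hF hp1 hM
    (hω.pow (pow_pos hprime.pos _) (by rw [pow_add, mul_comm] : p ^ (M + r) = p ^ r * p ^ M))
  rw [← norm_sub_one_pow_eq hM hω] at hL
  have hω0 : ω - 1 ≠ 0 := sub_ne_zero.2 (hω.ne_one (Nat.one_lt_pow hMr hprime.one_lt))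
  have hω1 : ‖ω - 1‖ < 1 := norm_sub_one_lt_one hMr hp1 hω
  have norm_p_le {l : ℕ} (hl : l < p ^ r) : ‖(p : K)‖ ≤ ‖ω - 1‖ ^ l := by
    rw [← norm_sub_one_pow_totient_prime_pow hMr hω, totient_prime_pow_add p hM]
    refine pow_le_pow_of_le_one (norm_nonneg _) hω1.le (hl.le.trans ?_)
    exact Nat.le_mul_of_pos_right _ (Nat.totient_pos.2 (pow_pos hprime.pos M))
  have hp0 : 0 < ‖(p : K)‖ := by
    rw [← norm_sub_one_pow_totient_prime_pow hMr hω]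
    exact pow_pos (norm_pos_iff.2 hω0) _
  have htaylor : (taylor 1 P).natDegree < p ^ r := by rwa [natDegree_taylor]
  have norm_taylor_le (l : ℕ) :
      ‖((taylor 1 P).coeff l : K)‖ ≤ ‖(p : K)‖⁻¹ * ‖aeval ω P‖ := by
    rcases le_or_gt (p ^ r) l with hl | hl
    · rw [coeff_eq_zero_of_natDegree_lt (htaylor.trans_le hl), ZeroMemClass.coe_zero, norm_zero]
      positivity
    · rw [le_inv_mul_iff₀ hp0, mul_comm, ← aeval_sub_one_taylor]
      exact (mul_le_mul_of_nonneg_left (norm_p_le hl) (norm_nonneg _)).trans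
        (hL.norm_coeff_mul_pow_le hω0 hω1.ne htaylor l)
  have := norm_algebraMap_coeff_taylor_le (R := cyclotomicLayer F K p M) (K := K)
    (r := -1) (by simp) norm_taylor_le j
  rwa [taylor_taylor, neg_add_cancel, taylor_zero] at this

theorem exists_isPrimitiveRoot_forall_eq_pow {ι R : Type*} [CommRing R] [IsDomain R]
    (I : Finset ι) {w : ι → R} (hw : ∀ i ∈ I, ∃ N, w i ^ p ^ N = 1) :
    ∃ (s : ℕ) (ω : R), IsPrimitiveRoot ω (p ^ s) ∧ ∀ i ∈ I, ∃ t, ω ^ t = w i := by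
  have hprime : p.Prime := Fact.out
  rcases I.eq_empty_or_nonempty with rfl | hI
  · exact ⟨0, 1, by simp, by simp⟩
  obtain ⟨m, hm, hmax⟩ := I.exists_max_image (fun i => orderOf (w i)) hI
  have orderOf_eq {i} (hi : i ∈ I) : ∃ s, orderOf (w i) = p ^ s := by
    obtain ⟨N, hN⟩ := hw i hi
    obtain ⟨s, -, hs⟩ := (Nat.dvd_prime_pow hprime).1 (orderOf_dvd_of_pow_eq_one hN)
    exact ⟨s, hs⟩
  obtain ⟨s, hs⟩ := orderOf_eq hm
  have hprim : IsPrimitiveRoot (w m) (p ^ s) := hs ▸ IsPrimitiveRoot.orderOf (w m)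
  have : NeZero (p ^ s) := ⟨pow_ne_zero s hprime.ne_zero⟩
  refine ⟨s, w m, hprim, fun i hi => ?_⟩
  obtain ⟨t, ht⟩ := orderOf_eq hi
  have hts : p ^ t ≤ p ^ s := ht ▸ hs ▸ hmax i hi
  have hdvd : p ^ t ∣ p ^ s := pow_dvd_pow p ((Nat.pow_le_pow_iff_right hprime.one_lt).1 hts)
  obtain ⟨j, -, hj⟩ :=
    hprim.eq_pow_of_pow_eq_one (orderOf_dvd_iff_pow_eq_one.1 (ht ▸ hdvd))
  exact ⟨j, hj⟩

theorem norm_sum_fiber_le_of_isPrimitiveRoot (hF : NormsInPowers F K ‖(p : K)‖)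
    (hp1 : ‖(p : K)‖ < 1) {M r : ℕ} (hM : M ≠ 0) {ω : K}
    (hω : IsPrimitiveRoot ω (p ^ (M + r))) {ι : Type*} (I : Finset ι) {j : ι → ℕ}
    (hj : ∀ i, j i < p ^ r) (e : ι → cyclotomicLayer F K p M) (l : ℕ) :
    ‖∑ i ∈ I with j i = l, (e i : K)‖ ≤ ‖(p : K)‖⁻¹ * ‖∑ i ∈ I, e i * ω ^ j i‖ := by
  let P : (cyclotomicLayer F K p M)[X] := ∑ i ∈ I, C (e i) * X ^ j i
  have hP : P.natDegree < p ^ r := by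
    refine Nat.lt_of_le_pred (pow_pos (Fact.out : p.Prime).pos r) ?_
    exact natDegree_sum_le_of_forall_le _ _ fun i _ =>
      (natDegree_C_mul_X_pow_le _ _).trans (Nat.le_pred_of_lt (hj i))
  have hPω : aeval ω P = ∑ i ∈ I, e i * ω ^ j i := by
    simp only [P, map_sum, map_mul, aeval_C, map_pow, aeval_X]
    rfl
  have hPl : (P.coeff l : K) = ∑ i ∈ I with j i = l, (e i : K) := by
    simp only [P, finsetSum_coeff, coeff_C_mul_X_pow, ← Finset.sum_filter,
      AddSubmonoidClass.coe_finsetSum, eq_comm]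
  rw [← hPl, ← hPω]
  exact norm_coeff_le_of_isPrimitiveRoot hF hp1 hM hω hP l

open Classical in
theorem norm_sum_cluster_le_of_isPrimitiveRoot (hF : NormsInPowers F K ‖(p : K)‖)
    (hp1 : ‖(p : K)‖ < 1) {M r : ℕ} (hM : M ≠ 0) {ω : K}
    (hω : IsPrimitiveRoot ω (p ^ (M + r))) {ι : Type*} (I : Finset ι) (t : ι → ℕ)
    (y : ι → cyclotomicLayer F K p M) (κ : K) :
    ‖∑ i ∈ I with (ω ^ t i) ^ p ^ M = κ, ω ^ t i * y i‖ ≤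
      ‖(p : K)‖⁻¹ * ‖∑ i ∈ I, ω ^ t i * y i‖ := by
  have hprime : p.Prime := Fact.out
  have hr : 0 < p ^ r := pow_pos hprime.pos r
  let j (i : ι) := t i % p ^ r
  have hj (i) : j i < p ^ r := Nat.mod_lt _ hr
  let e (i : ι) : cyclotomicLayer F K p M :=
    ⟨(ω ^ p ^ r) ^ (t i / p ^ r), pow_mem (mem_cyclotomicLayer
      (by rw [← pow_mul, ← pow_add, add_comm, hω.pow_eq_one])) _⟩ * y i
  have term_eq (i) : ω ^ t i * y i = e i * ω ^ j i := by
    conv_lhs => rw [← Nat.div_add_mod (t i) (p ^ r), pow_add, pow_mul]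
    simp only [e, j, MulMemClass.coe_mul]
    ring
  have hη : IsPrimitiveRoot (ω ^ p ^ M) (p ^ r) :=
    hω.pow (pow_pos hprime.pos _) (pow_add p M r)
  have pow_eq (i) : (ω ^ t i) ^ p ^ M = (ω ^ p ^ M) ^ j i := by
    rw [pow_right_comm, ← pow_mod_orderOf, ← hη.eq_orderOf]
  rcases (I.filter fun i => (ω ^ t i) ^ p ^ M = κ).eq_empty_or_nonempty with hempty | ⟨i₀, hi₀⟩
  · rw [hempty, Finset.sum_empty, norm_zero]
    positivity
  obtain rfl := (Finset.mem_filter.1 hi₀).2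
  have mem_cluster (i) : (ω ^ t i) ^ p ^ M = (ω ^ t i₀) ^ p ^ M ↔ j i = j i₀ := by
    rw [pow_eq, pow_eq]
    exact ⟨hη.pow_inj (hj i) (hj i₀), fun h => by rw [h]⟩
  have hcluster : ∑ i ∈ I with (ω ^ t i) ^ p ^ M = (ω ^ t i₀) ^ p ^ M, ω ^ t i * y i =
      (∑ i ∈ I with j i = j i₀, (e i : K)) * ω ^ j i₀ := by
    simp only [mem_cluster, Finset.sum_mul, term_eq]
    exact Finset.sum_congr rfl fun i hi => by rw [(Finset.mem_filter.1 hi).2]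
  have hω1 : ‖ω‖ = 1 := (hω.isOfFinOrder (pow_ne_zero _ hprime.ne_zero)).norm_eq_one
  rw [hcluster, norm_mul, norm_pow, hω1, one_pow, mul_one]
  simp only [term_eq]
  exact norm_sum_fiber_le_of_isPrimitiveRoot hF hp1 hM hω I hj e (j i₀)

open Classical in
theorem norm_sum_cluster_le (hF : NormsInPowers F K ‖(p : K)‖) (hp0 : (p : K) ≠ 0)
    (hp1 : ‖(p : K)‖ < 1) {M : ℕ} (hM : M ≠ 0) {ι : Type*} (I : Finset ι) {w : ι → K}
    (hw : ∀ i ∈ I, ∃ N, w i ^ p ^ N = 1) (y : ι → cyclotomicLayer F K p M) (κ : K) :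
    ‖∑ i ∈ I with w i ^ p ^ M = κ, w i * y i‖ ≤ ‖(p : K)‖⁻¹ * ‖∑ i ∈ I, w i * y i‖ := by
  obtain ⟨s, ω, hω, hpow⟩ := exists_isPrimitiveRoot_forall_eq_pow I hw
  rcases le_total M s with hMs | hsM
  · obtain ⟨r, rfl⟩ := Nat.exists_eq_add_of_le hMs
    choose! t ht using hpow
    have := norm_sum_cluster_le_of_isPrimitiveRoot hF hp1 hM hω I t y κ
    rwa [Finset.filter_congr fun i hi => by rw [ht i hi],
      Finset.sum_congr rfl fun i hi => by rw [ht i (Finset.mem_filter.1 hi).1],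
      Finset.sum_congr (s₁ := I) rfl fun i hi => by rw [ht i hi]] at this
  · have hw1 (i) (hi : i ∈ I) : w i ^ p ^ M = 1 := by
      obtain ⟨t, ht⟩ := hpow i hi
      rw [← ht, pow_right_comm, (hω.pow_eq_one_iff_dvd _).2 (pow_dvd_pow p hsM), one_pow]
    rw [Finset.filter_congr fun i hi => by rw [hw1 i hi], Finset.filter_const]
    split_ifs
    · exact le_mul_of_one_le_left (norm_nonneg _) (one_le_inv₀ (norm_pos_iff.2 hp0) |>.2 hp1.le)
    · rw [Finset.sum_empty, norm_zero]
      positivity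

end Ramification

section RootsOfUnity

/-- The roots of unity of order prime to `p`. -/
def primeToRoots (K : Type*) [Monoid K] (p : ℕ) : Set K :=
  {ζ | ∃ N, p.Coprime N ∧ ζ ^ N = 1}

theorem exists_mul_eq_of_pow_mul_eq_one {G : Type*} [Monoid G] {m n : ℕ} (h : m.Coprime n) {x : G}
    (hx : x ^ (m * n) = 1) : ∃ y z : G, y ^ m = 1 ∧ z ^ n = 1 ∧ y * z = x := by
  obtain ⟨i, him, hin⟩ := Nat.chineseRemainder h 0 1
  obtain ⟨j, hjm, hjn⟩ := Nat.chineseRemainder h 1 0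
  have hmj : m * n ∣ j * m := by
    rw [mul_comm j]
    exact mul_dvd_mul_left m (Nat.modEq_zero_iff_dvd.1 hjn)
  have hni : m * n ∣ i * n := mul_dvd_mul_right (Nat.modEq_zero_iff_dvd.1 him) n
  refine ⟨x ^ j, x ^ i, ?_, ?_, ?_⟩
  · rw [← pow_mul, ← orderOf_dvd_iff_pow_eq_one]
    exact (orderOf_dvd_of_pow_eq_one hx).trans hmj
  · rw [← pow_mul, ← orderOf_dvd_iff_pow_eq_one]
    exact (orderOf_dvd_of_pow_eq_one hx).trans hni
  · rw [← pow_add, ← pow_one x, ← pow_mul, one_mul]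
    refine pow_eq_pow_of_modEq ((Nat.modEq_and_modEq_iff_modEq_mul h).1 ⟨?_, ?_⟩) hx
    exacts [hjm.add him, hjn.add hin]

variable {p : ℕ} [Fact p.Prime]

theorem exists_mul_eq_of_isOfFinOrder {G : Type*} [Monoid G] {x : G} (hx : IsOfFinOrder x) :
    ∃ τ ∈ primeToRoots G p, ∃ w : G, (∃ N, w ^ p ^ N = 1) ∧ τ * w = x := by
  obtain ⟨n, hn, hxn⟩ := isOfFinOrder_iff_pow_eq_one.1 hx
  obtain ⟨e, m, hm, rfl⟩ := Nat.exists_eq_pow_mul_and_not_dvd hn.ne' p (Fact.out : p.Prime).ne_one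
  have hcop : p.Coprime m := (Nat.Prime.coprime_iff_not_dvd Fact.out).2 hm
  rw [mul_comm] at hxn
  obtain ⟨τ, w, hτ, hw, hmul⟩ := exists_mul_eq_of_pow_mul_eq_one (hcop.symm.pow_right e) hxn
  exact ⟨τ, ⟨m, hcop, hτ⟩, w, ⟨e, hw⟩, hmul⟩

theorem exists_algebraMap_mul_eq_of_isOfFinOrder {F G : Type*} [CommSemiring F]
    [Semiring G] [Algebra F G] (hFroots : primeToRoots G p ⊆ Set.range (algebraMap F G))
    {ζ : G} (hζ : IsOfFinOrder ζ) :
    ∃ t : F, algebraMap F G t ∈ primeToRoots G p ∧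
      ∃ w : G, (∃ N, w ^ p ^ N = 1) ∧ algebraMap F G t * w = ζ := by
  obtain ⟨τ, hτ, w, hw, hmul⟩ := exists_mul_eq_of_isOfFinOrder (p := p) hζ
  obtain ⟨t, rfl⟩ := hFroots hτ
  exact ⟨t, hτ, w, hw, hmul⟩

theorem isOfFinOrder_of_mem_primeToRoots {G : Type*} [Monoid G] {τ : G}
    (hτ : τ ∈ primeToRoots G p) : IsOfFinOrder τ := by
  obtain ⟨N, hN, hτN⟩ := hτ
  have hN0 : N ≠ 0 := by
    rintro rfl
    exact (Fact.out : p.Prime).ne_one (by simpa using hN)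
  exact isOfFinOrder_iff_pow_eq_one.2 ⟨N, Nat.pos_of_ne_zero hN0, hτN⟩

theorem norm_eq_one_of_mem_primeToRoots {K : Type*} [NormedField K] {τ : K}
    (hτ : τ ∈ primeToRoots K p) : ‖τ‖ = 1 :=
  (isOfFinOrder_of_mem_primeToRoots hτ).norm_eq_one

theorem exists_pos_le_norm_sum_single_cluster {ι K : Type*} [Finite ι] [NormedField K]
    {I : Finset ι} (hgap : ∀ b : ι → K, HasGap I (primeToRoots K p) b) (M : ℕ) (a : ι → K) :
    ∃ c > 0, ∀ τ w : ι → K, (∀ i ∈ I, τ i ∈ primeToRoots K p) →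
      (∀ i ∈ I, ∃ N, w i ^ p ^ N = 1) → (∀ i ∈ I, ∀ j ∈ I, w i ^ p ^ M = w j ^ p ^ M) →
      ∑ i ∈ I, w i * (τ i * a i) = 0 ∨ c ≤ ‖∑ i ∈ I, w i * (τ i * a i)‖ := by
  have hprime : p.Prime := Fact.out
  have hfin : {η : K | η ^ p ^ M = 1}.Finite := by
    refine (nthRootsFinset (p ^ M) (1 : K)).finite_toSet.subset fun η hη => ?_
    exact (mem_nthRootsFinset (pow_pos hprime.pos M) 1).2 hη
  obtain ⟨c, hc, hgap_c⟩ := hasGap_iff.1 (HasGap.mul_finite hfin ⟨1, one_pow _⟩ hgap a)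
  refine ⟨c, hc, fun τ w hτ hw hcluster => ?_⟩
  rcases I.eq_empty_or_nonempty with rfl | ⟨i₀, hi₀⟩
  · simp
  obtain ⟨N, hN⟩ := hw i₀ hi₀
  have hnorm : ‖w i₀‖ = 1 :=
    (isOfFinOrder_iff_pow_eq_one.2 ⟨p ^ N, pow_pos hprime.pos N, hN⟩).norm_eq_one
  have hw₀ : w i₀ ≠ 0 := norm_ne_zero_iff.1 (hnorm.trans_ne one_ne_zero)
  have hfactor : ∑ i ∈ I, w i * (τ i * a i) = w i₀ * ∑ i ∈ I, (τ i * (w i / w i₀)) • a i := by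
    rw [Finset.mul_sum]
    refine Finset.sum_congr rfl fun i _ => ?_
    rw [smul_eq_mul]
    field_simp
  rw [hfactor, norm_mul, hnorm, one_mul, mul_eq_zero, or_iff_right hw₀]
  refine hgap_c _ fun i hi => Set.mul_mem_mul (hτ i hi) ?_
  rw [Set.mem_ofPred_eq, div_pow, hcluster i hi i₀ hi₀, div_self (pow_ne_zero _ hw₀)]

end RootsOfUnity

theorem exists_cyclotomicLayer_approx {ι F K : Type*} [Finite ι] [Field F] [NormedField K]
    [Algebra F K] {p : ℕ} {a : ι → K}
    (ha : ∀ i, a i ∈ closure {x : K | ∃ M, x ∈ cyclotomicLayer F K p M}) {ε : ℝ} (hε : 0 < ε) :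
    ∃ M ≠ 0, ∃ b : ι → cyclotomicLayer F K p M, ∀ i, ‖a i - b i‖ ≤ ε := by
  have approx (i) : ∃ x : K, (∃ M, x ∈ cyclotomicLayer F K p M) ∧ ‖a i - x‖ ≤ ε := by
    obtain ⟨x, hx, hdist⟩ := Metric.mem_closure_iff.1 (ha i) ε hε
    exact ⟨x, hx, (dist_eq_norm (a i) x ▸ hdist).le⟩
  choose x hx hax using approx
  choose m hx using hx
  obtain ⟨M, hM⟩ := Finite.exists_le m
  refine ⟨M + 1, M.succ_ne_zero, fun i => ⟨x i, ?_⟩, hax⟩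
  exact cyclotomicLayer_mono ((hM i).trans M.le_succ) (hx i)

section Clusters

variable {ι F K : Type*} [Field F] [NormedField K] [IsUltrametricDist K] [Algebra F K]
  {p : ℕ} [Fact p.Prime]

open Classical in
theorem norm_sum_cluster_le_of_approx (hF : NormsInPowers F K ‖(p : K)‖) (hp0 : (p : K) ≠ 0)
    (hp1 : ‖(p : K)‖ < 1) {M : ℕ} (hM : M ≠ 0) (I : Finset ι) {w : ι → K}
    (hw : ∀ i ∈ I, ∃ N, w i ^ p ^ N = 1) {x : ι → K} {y : ι → cyclotomicLayer F K p M} {ε : ℝ}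
    (hxy : ∀ i ∈ I, ‖x i - y i‖ ≤ ε) (hsum : ‖∑ i ∈ I, w i * x i‖ ≤ ε) (κ : K) :
    ‖∑ i ∈ I with w i ^ p ^ M = κ, w i * x i‖ ≤ ‖(p : K)‖⁻¹ * ε := by
  have hε : 0 ≤ ε := (norm_nonneg _).trans hsum
  have hp1' : 1 ≤ ‖(p : K)‖⁻¹ := (one_le_inv₀ (norm_pos_iff.2 hp0)).2 hp1.le
  have error {J : Finset ι} (hJ : J ⊆ I) : ‖∑ i ∈ J, w i * x i - ∑ i ∈ J, w i * y i‖ ≤ ε := by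
    rw [← Finset.sum_sub_distrib]
    refine IsUltrametricDist.norm_sum_le_of_forall_le_of_nonneg hε fun i hi => ?_
    obtain ⟨N, hN⟩ := hw i (hJ hi)
    have hpN : 0 < p ^ N := pow_pos (Fact.out : p.Prime).pos N
    rw [← mul_sub, norm_mul,
      (isOfFinOrder_iff_pow_eq_one.2 ⟨p ^ N, hpN, hN⟩).norm_eq_one, one_mul]
    exact hxy i (hJ hi)
  have hsum_y : ‖∑ i ∈ I, w i * y i‖ ≤ ε := by
    rw [← sub_add_cancel (∑ i ∈ I, w i * (y i : K)) (∑ i ∈ I, w i * x i)]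
    refine (IsUltrametricDist.norm_add_le_max _ _).trans (max_le ?_ hsum)
    rw [norm_sub_rev]
    exact error subset_rfl
  rw [← sub_add_cancel (∑ i ∈ I with w i ^ p ^ M = κ, w i * x i)
    (∑ i ∈ I with w i ^ p ^ M = κ, w i * (y i : K))]
  refine (IsUltrametricDist.norm_add_le_max _ _).trans (max_le ?_ ?_)
  · exact (error (Finset.filter_subset _ _)).trans (le_mul_of_one_le_left hε hp1')
  · exact (norm_sum_cluster_le hF hp0 hp1 hM I hw y κ).trans (by gcongr)

/-- Unless all the `p`-power components of the point lie in one coset of the roots of unity of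
order dividing `p ^ M`, the sum splits into strictly shorter ones, each of them small. -/
theorem hasGap_of_forall_ssubset [Finite ι] (hF : NormsInPowers F K ‖(p : K)‖)
    (hp0 : (p : K) ≠ 0) (hp1 : ‖(p : K)‖ < 1)
    (hFroots : primeToRoots K p ⊆ Set.range (algebraMap F K)) {I : Finset ι}
    (hgap : ∀ b : ι → K, HasGap I (primeToRoots K p) b) {a : ι → K}
    (ha : ∀ i, a i ∈ closure {x : K | ∃ M, x ∈ cyclotomicLayer F K p M})
    (hsub : ∀ J ⊂ I, HasGap J {ζ : K | IsOfFinOrder ζ} a) :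
    HasGap I {ζ : K | IsOfFinOrder ζ} a := by
  classical
  obtain ⟨δ, hδ, hsub_δ⟩ := Metric.eventually_nhds_iff.1 <|
    (eventually_all_finset I.ssubsets).2 fun J hJ => hsub J (Finset.mem_ssubsets.1 hJ)
  have hp := norm_pos_iff.2 hp0
  obtain ⟨ε, hε, hεδ⟩ := exists_between (mul_pos hp hδ)
  obtain ⟨M, hM, b, hab⟩ := exists_cyclotomicLayer_approx ha hε
  obtain ⟨c, hc, hcluster⟩ := exists_pos_le_norm_sum_single_cluster hgap M a
  refine hasGap_iff.2 ⟨min c ε, lt_min hc hε, fun ζ hζ => ?_⟩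
  choose! t ht w hw hmul using fun i hi =>
    exists_algebraMap_mul_eq_of_isOfFinOrder hFroots (hζ i hi)
  have hsum {J} (hJ : J ⊆ I) :
      ∑ i ∈ J, ζ i • a i = ∑ i ∈ J, w i * (algebraMap F K (t i) * a i) :=
    Finset.sum_congr rfl fun i hi => by
      rw [← hmul i (hJ hi), smul_eq_mul, mul_left_comm, mul_assoc]
  by_cases hall : ∀ i ∈ I, ∀ j ∈ I, w i ^ p ^ M = w j ^ p ^ M
  · rw [hsum subset_rfl]
    exact (hcluster _ w ht hw hall).imp_right (min_le_left c ε).trans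
  refine or_iff_not_imp_right.2 fun hsmall => ?_
  rw [← Finset.sum_fiberwise_of_maps_to (t := I.image fun i => w i ^ p ^ M)
    fun i hi => Finset.mem_image_of_mem _ hi]
  refine Finset.sum_eq_zero fun κ _ => ?_
  have hproper : I.filter (fun i => w i ^ p ^ M = κ) ⊂ I := by
    refine (Finset.filter_subset _ _).ssubset_of_ne fun h => hall fun i hi j hj => ?_
    rw [Finset.filter_eq_self.1 h i hi, Finset.filter_eq_self.1 h j hj]
  have happrox (i) (hi : i ∈ I) :
      ‖algebraMap F K (t i) * a i - (t i • b i : cyclotomicLayer F K p M)‖ ≤ ε := by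
    rw [IntermediateField.coe_smul, Algebra.smul_def, ← mul_sub, norm_mul,
      norm_eq_one_of_mem_primeToRoots (ht i hi), one_mul]
    exact hab i
  have hcluster_le := norm_sum_cluster_le_of_approx hF hp0 hp1 hM I hw happrox
    (hsum subset_rfl ▸ (not_le.1 hsmall).le.trans (min_le_right c ε)) κ
  rw [← hsum (Finset.filter_subset _ _)] at hcluster_le
  refine hsub_δ ?_ _ (Finset.mem_ssubsets.2 hproper) ζ
    (fun i hi => hζ i (Finset.mem_of_mem_filter i hi)) rfl
  rw [dist_zero_right]
  exact hcluster_le.trans_lt ((inv_mul_lt_iff₀ hp).2 hεδ)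

theorem hasGap_of_mem_closure [Finite ι] (hF : NormsInPowers F K ‖(p : K)‖)
    (hp0 : (p : K) ≠ 0) (hp1 : ‖(p : K)‖ < 1)
    (hFroots : primeToRoots K p ⊆ Set.range (algebraMap F K))
    (hgap : ∀ (I : Finset ι) (b : ι → K), HasGap I (primeToRoots K p) b) {a : ι → K}
    (ha : ∀ i, a i ∈ closure {x : K | ∃ M, x ∈ cyclotomicLayer F K p M}) (I : Finset ι) :
    HasGap I {ζ : K | IsOfFinOrder ζ} a :=
  I.strongInduction fun J ih => hasGap_of_forall_ssubset hF hp0 hp1 hFroots (hgap J) ha ih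

end Clusters

section DiscreteValuationRing

variable {A K : Type*} [CommRing A] [NormedField K] {θ : A →+* K}

theorem norm_map_eq_one_of_isUnit (hθ : ∀ w, ‖θ w‖ ≤ 1) {u : A} (hu : IsUnit u) : ‖θ u‖ = 1 := by
  obtain ⟨v, hv⟩ := hu.exists_right_inv
  have hmul : ‖θ u‖ * ‖θ v‖ = 1 := by rw [← norm_mul, ← map_mul, hv, map_one, norm_one]
  exact (hθ u).antisymm (hmul.ge.trans (mul_le_of_le_one_right (norm_nonneg _) (hθ v)))

variable [IsDomain A] [IsDiscreteValuationRing A] {ϖ : A}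

theorem exists_norm_map_eq_pow (hθ : ∀ w, ‖θ w‖ ≤ 1) (hϖ : Irreducible ϖ) {w : A} (hw : w ≠ 0) :
    ∃ m : ℕ, Associated w (ϖ ^ m) ∧ ‖θ w‖ = ‖θ ϖ‖ ^ m := by
  obtain ⟨m, hm⟩ := IsDiscreteValuationRing.associated_pow_irreducible hw hϖ
  obtain ⟨u, hu⟩ := hm
  refine ⟨m, ⟨u, hu⟩, ?_⟩
  rw [← norm_pow, ← map_pow, ← hu, map_mul, norm_mul, norm_map_eq_one_of_isUnit hθ u.isUnit,
    mul_one]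

theorem pow_dvd_iff_norm_map_le (hθ : ∀ w, ‖θ w‖ ≤ 1) (hϖ : Irreducible ϖ) (hϖ0 : θ ϖ ≠ 0)
    (hϖ1 : ‖θ ϖ‖ < 1) {w : A} {n : ℕ} : ϖ ^ n ∣ w ↔ ‖θ w‖ ≤ ‖θ ϖ‖ ^ n := by
  constructor
  · rintro ⟨v, rfl⟩
    rw [map_mul, map_pow, norm_mul, norm_pow]
    exact mul_le_of_le_one_right (by positivity) (hθ v)
  · intro h
    rcases eq_or_ne w 0 with rfl | hw
    · exact dvd_zero _
    obtain ⟨m, hwm, hm⟩ := exists_norm_map_eq_pow hθ hϖ hw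
    rw [hm, pow_le_pow_iff_right_of_lt_one₀ (norm_pos_iff.2 hϖ0) hϖ1] at h
    exact (pow_dvd_pow ϖ h).trans hwm.symm.dvd

/-- The subfield of `K` generated by the image of `θ`, that is, the image of the fraction field
of `A` when `θ` is injective. -/
def fractionSubfield {A K : Type*} [CommRing A] [Field K] (θ : A →+* K) : Subfield K :=
  Subfield.closure (Set.range θ)

theorem map_mem_fractionSubfield {A K : Type*} [CommRing A] [Field K] (θ : A →+* K) (w : A) :
    θ w ∈ fractionSubfield θ :=
  Subfield.subset_closure ⟨w, rfl⟩

theorem exists_pow_mul_eq_map {A K : Type*} [CommRing A] [IsDomain A] [IsDiscreteValuationRing A]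
    [Field K] {θ : A →+* K} {ϖ : A} (hϖ : Irreducible ϖ) (hϖ0 : θ ϖ ≠ 0) {x : K}
    (hx : x ∈ fractionSubfield θ) : ∃ (n : ℕ) (w : A), θ ϖ ^ n * x = θ w := by
  rw [fractionSubfield, Subfield.mem_closure_iff, ← RingHom.coe_range, Subring.closure_eq] at hx
  obtain ⟨-, ⟨a, rfl⟩, -, ⟨b, rfl⟩, rfl⟩ := hx
  rcases eq_or_ne b 0 with rfl | hb
  · exact ⟨0, 0, by simp⟩
  obtain ⟨n, u, hu⟩ := IsDiscreteValuationRing.associated_pow_irreducible hb hϖ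
  have hb' : θ b ≠ 0 := by
    intro h
    have := congrArg θ hu
    rw [map_mul, h, zero_mul, map_pow] at this
    exact pow_ne_zero n hϖ0 this.symm
  refine ⟨n, u * a, ?_⟩
  rw [← map_pow, ← hu, map_mul, map_mul]
  field_simp

theorem exists_forall_pow_mul_eq_map {ι A K : Type*} [Finite ι] [CommRing A]
    [IsDomain A] [IsDiscreteValuationRing A] [Field K] {θ : A →+* K} {ϖ : A}
    (hϖ : Irreducible ϖ) (hϖ0 : θ ϖ ≠ 0) (x : ι → fractionSubfield θ) :
    ∃ (n : ℕ) (w : ι → A), ∀ i, θ ϖ ^ n * x i = θ (w i) := by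
  cases nonempty_fintype ι
  choose n w hw using fun i => exists_pow_mul_eq_map hϖ hϖ0 (x i).2
  refine ⟨Finset.univ.sup n, fun i => ϖ ^ (Finset.univ.sup n - n i) * w i, fun i => ?_⟩
  rw [map_mul, map_pow, ← hw, ← mul_assoc, pow_sub_mul_pow _ (Finset.le_sup (Finset.mem_univ i))]

theorem normsInPowers_fractionSubfield (hθ : ∀ w, ‖θ w‖ ≤ 1) (hϖ : Irreducible ϖ)
    (hϖ0 : θ ϖ ≠ 0) : NormsInPowers (fractionSubfield θ) K ‖θ ϖ‖ := by
  rintro ⟨x, hx⟩ hx0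
  have hx0 : x ≠ 0 := fun h => hx0 (Subtype.ext h)
  obtain ⟨n, w, hw⟩ := exists_pow_mul_eq_map hϖ hϖ0 hx
  have hw0 : w ≠ 0 := by
    rintro rfl
    exact mul_ne_zero (pow_ne_zero n hϖ0) hx0 (hw.trans (map_zero θ))
  obtain ⟨m, -, hm⟩ := exists_norm_map_eq_pow hθ hϖ hw0
  have hϖ' := norm_ne_zero_iff.2 hϖ0
  refine ⟨m - n, ?_⟩
  change ‖x‖ = _
  rw [← hw, norm_mul, norm_pow] at hm
  rw [zpow_sub₀ hϖ', zpow_natCast, zpow_natCast, ← hm]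
  field_simp

theorem mem_range_of_norm_le_one (hθ : ∀ w, ‖θ w‖ ≤ 1) (hϖ : Irreducible ϖ) (hϖ0 : θ ϖ ≠ 0)
    (hϖ1 : ‖θ ϖ‖ < 1) {x : K} (hx : x ∈ fractionSubfield θ) (hx1 : ‖x‖ ≤ 1) :
    x ∈ Set.range θ := by
  obtain ⟨n, w, hw⟩ := exists_pow_mul_eq_map hϖ hϖ0 hx
  have hdvd : ϖ ^ n ∣ w := by
    rw [pow_dvd_iff_norm_map_le hθ hϖ hϖ0 hϖ1, ← hw, norm_mul, norm_pow]
    exact mul_le_of_le_one_right (by positivity) hx1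
  obtain ⟨v, rfl⟩ := hdvd
  rw [map_mul, map_pow] at hw
  exact ⟨v, (mul_left_cancel₀ (pow_ne_zero n hϖ0) hw).symm⟩

variable [IsUltrametricDist K] [IsPrecomplete (Ideal.span {ϖ}) A]

theorem isClosed_range (hθ : ∀ w, ‖θ w‖ ≤ 1) (hϖ : Irreducible ϖ) (hϖ0 : θ ϖ ≠ 0)
    (hϖ1 : ‖θ ϖ‖ < 1) : IsClosed (Set.range θ) := by
  refine isClosed_of_closure_subset fun x hx => ?_
  have hpos := norm_pos_iff.2 hϖ0
  have approx (n : ℕ) : ∃ w, ‖x - θ w‖ < ‖θ ϖ‖ ^ n := by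
    obtain ⟨-, ⟨w, rfl⟩, hw⟩ := Metric.mem_closure_iff.1 hx (‖θ ϖ‖ ^ n) (by positivity)
    exact ⟨w, dist_eq_norm x (θ w) ▸ hw⟩
  choose w hw using approx
  have smodEq_iff {n : ℕ} {a b : A} :
      a ≡ b [SMOD (Ideal.span {ϖ} ^ n • ⊤ : Submodule A A)] ↔ ‖θ a - θ b‖ ≤ ‖θ ϖ‖ ^ n := by
    rw [SModEq.sub_mem, smul_eq_mul, Ideal.mul_top, Ideal.span_singleton_pow,
      Ideal.mem_span_singleton, pow_dvd_iff_norm_map_le hθ hϖ hϖ0 hϖ1, map_sub]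
  have norm_sub_le_of {n : ℕ} {a b : K} (ha : ‖x - a‖ ≤ ‖θ ϖ‖ ^ n) (hb : ‖a - b‖ ≤ ‖θ ϖ‖ ^ n) :
      ‖x - b‖ ≤ ‖θ ϖ‖ ^ n := by
    rw [← sub_add_sub_cancel x a b]
    exact (IsUltrametricDist.norm_add_le_max _ _).trans (max_le ha hb)
  obtain ⟨L, hL⟩ := IsPrecomplete.prec (I := Ideal.span {ϖ}) ‹_› (f := w) fun {m n} hmn => by
    rw [smodEq_iff, ← sub_add_sub_cancel _ x]
    refine (IsUltrametricDist.norm_add_le_max _ _).trans (max_le ?_ ?_)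
    · exact (norm_sub_rev _ _).trans_le (hw m).le
    · exact (hw n).le.trans (pow_le_pow_of_le_one hpos.le hϖ1.le hmn)
  refine ⟨L, (sub_eq_zero.1 <| norm_le_zero_iff.1 ?_).symm⟩
  refine ge_of_tendsto' (tendsto_pow_atTop_nhds_zero_of_lt_one hpos.le hϖ1) fun n => ?_
  exact norm_sub_le_of (hw n).le (smodEq_iff.1 (hL n))

theorem isClosed_fractionSubfield (hθ : ∀ w, ‖θ w‖ ≤ 1) (hϖ : Irreducible ϖ) (hϖ0 : θ ϖ ≠ 0)
    (hϖ1 : ‖θ ϖ‖ < 1) : IsClosed (fractionSubfield θ : Set K) := by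
  refine isClosed_of_closure_subset fun x hx => ?_
  obtain ⟨y, hy, hxy⟩ := Metric.mem_closure_iff.1 hx 1 one_pos
  have hsub : x - y ∈ closure (fractionSubfield θ : Set K) :=
    (fractionSubfield θ).topologicalClosure.sub_mem hx (subset_closure hy)
  have hball : x - y ∈ closure (Metric.ball 0 1 ∩ (fractionSubfield θ : Set K)) :=
    Metric.isOpen_ball.inter_closure ⟨by rwa [mem_ball_zero_iff, ← dist_eq_norm], hsub⟩
  have hrange : x - y ∈ Set.range θ := by
    refine (isClosed_range hθ hϖ hϖ0 hϖ1).closure_subset_iff.2 (fun z hz => ?_) hball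
    exact mem_range_of_norm_le_one hθ hϖ hϖ0 hϖ1 hz.2 (mem_ball_zero_iff.1 hz.1).le
  obtain ⟨w, hw⟩ := hrange
  rw [← sub_add_cancel x y, ← hw]
  exact add_mem (map_mem_fractionSubfield θ w) hy

end DiscreteValuationRing

section Teichmuller

/-- The closed unit ball of an ultrametric normed field, as a ring. -/
noncomputable abbrev unitBallSubring (K : Type*) [NormedField K] [IsUltrametricDist K] :
    Subring K :=
  (NormedField.valuation (K := K)).integer

variable {p : ℕ} {K : Type*} [NormedField K] [IsUltrametricDist K]

theorem dvd_unitBallSubring_iff {x y : unitBallSubring K} : x ∣ y ↔ ‖(y : K)‖ ≤ ‖(x : K)‖ :=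
  (Valuation.integer.integers (NormedField.valuation (K := K))).dvd_iff_le

theorem isAdic_span_unitBallSubring {x : unitBallSubring K} (hx0 : (x : K) ≠ 0)
    (hx1 : ‖(x : K)‖ < 1) : IsAdic (Ideal.span {x}) := by
  have mem_iff (n : ℕ) (y : unitBallSubring K) :
      y ∈ Ideal.span {x} ^ n ↔ ‖y‖ ≤ ‖(x : K)‖ ^ n := by
    rw [Ideal.span_singleton_pow, Ideal.mem_span_singleton, dvd_unitBallSubring_iff,
      Subring.coe_pow, norm_pow]
    rfl
  have coe_pow (n : ℕ) : (↑(Ideal.span {x} ^ n) : Set (unitBallSubring K)) =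
      Metric.closedBall 0 (‖(x : K)‖ ^ n) :=
    Set.ext fun y => by rw [SetLike.mem_coe, mem_iff, mem_closedBall_zero_iff]
  refine isAdic_iff.2 ⟨fun n => ?_, fun s hs => ?_⟩
  · rw [coe_pow]
    exact IsUltrametricDist.isOpen_closedBall _ (pow_ne_zero n (norm_ne_zero_iff.2 hx0))
  · obtain ⟨ε, hε, hs⟩ := Metric.mem_nhds_iff.1 hs
    obtain ⟨n, hn⟩ := exists_pow_lt_of_lt_one hε hx1
    exact ⟨n, (coe_pow n).trans_subset <| (Metric.closedBall_subset_ball hn).trans hs⟩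

theorem isAdicComplete_unitBallSubring [CompleteSpace K] {x : unitBallSubring K}
    (hx0 : (x : K) ≠ 0) (hx1 : ‖(x : K)‖ < 1) :
    IsAdicComplete (Ideal.span {x}) (unitBallSubring K) := by
  have hclosed : IsClosed (unitBallSubring K : Set K) := by
    convert Metric.isClosed_closedBall (x := (0 : K)) (ε := 1)
    ext y
    exact mem_closedBall_zero_iff.symm
  exact (isAdic_span_unitBallSubring hx0 hx1).isAdicComplete_iff.2
    ⟨hclosed.completeSpace_coe, inferInstance⟩

theorem not_isUnit_natCast_unitBallSubring (hp1 : ‖(p : K)‖ < 1) :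
    ¬IsUnit (p : unitBallSubring K) := fun h => by
  have hone : ‖(1 : K)‖ ≤ ‖(p : K)‖ := by
    simpa using dvd_unitBallSubring_iff.1 (h.dvd (a := 1))
  exact absurd (norm_one.symm.trans_le hone) (not_le.2 hp1)

variable [Fact p.Prime]

theorem exists_untilt_eq_of_mem_primeToRoots {R : Type*} [CommRing R] [Fact ¬IsUnit (p : R)]
    [IsAdicComplete (Ideal.span {(p : R)}) R] {z : R} (hz : z ∈ primeToRoots R p) :
    ∃ x ∈ primeToRoots (PreTilt R p) p, x.untilt = z := by
  obtain ⟨N, hN, hzN⟩ := hz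
  obtain ⟨m, hm⟩ : ∃ m, z ^ (p * m) = z := by
    obtain ⟨_, hdvd, hmod⟩ := Nat.chineseRemainder hN 0 1
    obtain ⟨m, rfl⟩ := Nat.modEq_zero_iff_dvd.1 hdvd
    exact ⟨m, by simpa using pow_eq_pow_of_modEq hmod hzN⟩
  let y : Perfection R p := ⟨fun j => z ^ m ^ j, fun j => by
    rw [← pow_mul, pow_succ', mul_right_comm, mul_comm m, pow_mul, hm]⟩
  have hy : y ^ N = 1 := Perfection.extMonoid fun j => by
    rw [map_pow, Perfection.coeffMonoidHom_mk, ← pow_mul, mul_comm, pow_mul, hzN, one_pow, map_one]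
  let x := Perfection.mapMonoidHom p (Ideal.Quotient.mk (Ideal.span {(p : R)})).toMonoidHom y
  have hx : x ^ N = 1 := by rw [← map_pow, hy, map_one]
  exact ⟨x, ⟨N, hN, hx⟩,
    Perfection.teichmuller₀_mapMonoidHom_idealQuotientMk.trans (pow_one z)⟩

universe u

theorem exists_perfectRing_ringHom (R : Type u) [CommRing R] [IsDomain R] [CharP R p] :
    ∃ (k : Type u) (_ : Field k) (_ : CharP k p) (_ : PerfectRing k p) (f : k →+* R),
      ∀ x, IsOfFinOrder x → x ∈ Set.range f := by
  let := ZMod.algebra R p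
  let k := integralClosure (ZMod p) R
  let : Field k := (IsIntegralClosure.isField k (B := R) (Field.toIsField (ZMod p))).toField
  have : PerfectField k := Algebra.IsAlgebraic.perfectField (ZMod p)
  have : CharP k p := charP_of_injective_algebraMap (algebraMap (ZMod p) k).injective p
  refine ⟨k, inferInstance, inferInstance, PerfectField.toPerfectRing p, k.val.toRingHom, ?_⟩
  intro x hx
  obtain ⟨n, hn, hxn⟩ := isOfFinOrder_iff_pow_eq_one.1 hx
  exact ⟨⟨x, IsIntegral.of_pow hn (hxn ▸ isIntegral_one)⟩, rfl⟩

theorem exists_wittVector_ringHom (R : Type u) [CommRing R] [Fact ¬IsUnit (p : R)]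
    [IsAdicComplete (Ideal.span {(p : R)}) R] [IsDomain (PreTilt R p)] :
    ∃ (k : Type u) (_ : Field k) (_ : CharP k p) (_ : PerfectRing k p) (θ : WittVector p k →+* R),
      ∀ τ ∈ primeToRoots R p, τ ∈ Set.range (θ ∘ WittVector.teichmuller p) := by
  obtain ⟨k, hk, hk₁, hk₂, f, hf⟩ := exists_perfectRing_ringHom (p := p) (PreTilt R p)
  refine ⟨k, hk, hk₁, hk₂, (WittVector.fontaineTheta R p).comp (WittVector.map f), ?_⟩
  intro τ hτ
  obtain ⟨y, hy, rfl⟩ := exists_untilt_eq_of_mem_primeToRoots hτ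
  obtain ⟨x, rfl⟩ := hf y (isOfFinOrder_of_mem_primeToRoots hy)
  exact ⟨x, by simp [WittVector.map_teichmuller, WittVector.fontaineTheta_teichmuller]⟩

theorem exists_wittVector_ringHom_norm_le_one {K : Type u} [NormedField K] [IsUltrametricDist K]
    [CompleteSpace K] (hp0 : (p : K) ≠ 0) (hp1 : ‖(p : K)‖ < 1) :
    ∃ (k : Type u) (_ : Field k) (_ : CharP k p) (_ : PerfectRing k p) (θ : WittVector p k →+* K),
      (∀ w, ‖θ w‖ ≤ 1) ∧ ∀ τ ∈ primeToRoots K p, τ ∈ Set.range (θ ∘ WittVector.teichmuller p) := by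
  have : Fact ¬IsUnit (p : unitBallSubring K) := ⟨not_isUnit_natCast_unitBallSubring hp1⟩
  have : IsAdicComplete (Ideal.span {(p : unitBallSubring K)}) (unitBallSubring K) :=
    isAdicComplete_unitBallSubring hp0 hp1
  have : IsDomain (PreTilt (unitBallSubring K) p) :=
    PreTilt.isDomain K NormedField.valuation _ (Valuation.integer.integers _) p
  obtain ⟨k, hk, hk₁, hk₂, θ, hθ⟩ := exists_wittVector_ringHom (p := p) (unitBallSubring K)
  refine ⟨k, hk, hk₁, hk₂, (unitBallSubring K).subtype.comp θ, fun w => ?_, fun τ hτ => ?_⟩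
  · exact Subtype.prop (θ w)
  · let z : unitBallSubring K := ⟨τ, (norm_eq_one_of_mem_primeToRoots hτ).le⟩
    have hz : z ∈ primeToRoots (unitBallSubring K) p := hτ.imp fun N hN =>
      hN.imp_right fun h => Subtype.ext h
    obtain ⟨x, hx⟩ := hθ z hz
    exact ⟨x, congrArg Subtype.val hx⟩

end Teichmuller

section Noetherian

theorem exists_forall_map_eq_zero {R S : Type*} [CommRing R] [IsNoetherianRing R] [Semiring S]
    (f : ℕ → R) : ∃ N, ∀ φ : R →+* S, (∀ j < N, φ (f j) = 0) → ∀ j, φ (f j) = 0 := by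
  let J : ℕ →o Ideal R :=
    ⟨fun m => Ideal.span (f '' Set.Iio m), fun _ _ h =>
      Ideal.span_mono (Set.image_mono (Set.Iio_subset_Iio h))⟩
  obtain ⟨N, hN⟩ := monotone_stabilizes_iff_noetherian.2 ‹IsNoetherianRing R› J
  refine ⟨N, fun φ hφ j => ?_⟩
  have hker : J N ≤ RingHom.ker φ := Ideal.span_le.2 (by rintro _ ⟨j, hj, rfl⟩; exact hφ j hj)
  have hmem : f j ∈ J (max N (j + 1)) :=
    Ideal.subset_span ⟨j, (Nat.lt_succ_self j).trans_le (le_max_right _ _), rfl⟩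
  rw [← hN _ (le_max_left _ _)] at hmem
  exact hker hmem

variable {p : ℕ} [Fact p.Prime] {ι k K : Type*} [Finite ι]

theorem exists_pow_dvd_imp_sum_teichmuller_eq_zero [CommRing k] [IsNoetherianRing k] [CharP k p]
    [PerfectRing k p] (I : Finset ι) (b : ι → WittVector p k) :
    ∃ N, ∀ x : ι → k, (p : WittVector p k) ^ N ∣ ∑ i ∈ I, WittVector.teichmuller p (x i) * b i →
      ∑ i ∈ I, WittVector.teichmuller p (x i) * b i = 0 := by
  let G : WittVector p (MvPolynomial ι k) :=
    ∑ i ∈ I, WittVector.teichmuller p (MvPolynomial.X i) * WittVector.map MvPolynomial.C (b i)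
  have eval_G (x : ι → k) : WittVector.map (MvPolynomial.eval x) G =
      ∑ i ∈ I, WittVector.teichmuller p (x i) * b i := by
    rw [map_sum]
    refine Finset.sum_congr rfl fun i _ => ?_
    rw [map_mul, WittVector.map_teichmuller, MvPolynomial.eval_X]
    congr 1
    ext n
    rw [WittVector.map_coeff, WittVector.map_coeff, MvPolynomial.eval_C]
  obtain ⟨N, hN⟩ := exists_forall_map_eq_zero (S := k) G.coeff
  refine ⟨N, fun x hx => ?_⟩
  rw [← Ideal.mem_span_singleton, WittVector.mem_span_p_pow_iff_le_coeff_eq_zero] at hx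
  simp only [← eval_G, WittVector.map_coeff] at hx ⊢
  ext j
  rw [WittVector.map_coeff, hN _ hx j, WittVector.zero_coeff]

variable [NormedField K] [Field k] [CharP k p] [PerfectRing k p] {θ : WittVector p k →+* K}

theorem hasGap_range_teichmuller (hθ : ∀ w, ‖θ w‖ ≤ 1) (hp0 : (p : K) ≠ 0) (hp1 : ‖(p : K)‖ < 1)
    (I : Finset ι) (b : ι → WittVector p k) :
    HasGap I (Set.range (θ ∘ WittVector.teichmuller p)) fun i => θ (b i) := by
  obtain ⟨N, hN⟩ := exists_pow_dvd_imp_sum_teichmuller_eq_zero I b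
  refine hasGap_iff.2 ⟨‖(p : K)‖ ^ N, pow_pos (norm_pos_iff.2 hp0) N, fun ζ hζ => ?_⟩
  refine or_iff_not_imp_right.2 fun h => ?_
  choose! x hx using hζ
  have hsum : ∑ i ∈ I, ζ i • θ (b i) = θ (∑ i ∈ I, WittVector.teichmuller p (x i) * b i) := by
    rw [map_sum]
    exact Finset.sum_congr rfl fun i hi => by rw [map_mul, ← hx i hi]; rfl
  rw [hsum] at h ⊢
  rw [hN, map_zero]
  rw [pow_dvd_iff_norm_map_le hθ (WittVector.irreducible p), map_natCast]
  · exact (not_le.1 h).le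
  · rwa [map_natCast]
  · rwa [map_natCast]

theorem exists_subfield_hasGap_primeToRoots [IsUltrametricDist K] [CompleteSpace K]
    (hp0 : (p : K) ≠ 0) (hp1 : ‖(p : K)‖ < 1) :
    ∃ F : Subfield K, NormsInPowers F K ‖(p : K)‖ ∧ primeToRoots K p ⊆ F ∧
      ∀ (I : Finset ι) (a : ι → K), HasGap I (primeToRoots K p) a := by
  obtain ⟨k, _, _, _, θ, hθ, hroots⟩ := exists_wittVector_ringHom_norm_le_one hp0 hp1
  have hϖ := WittVector.irreducible (k := k) p
  rw [← map_natCast θ] at hp0 hp1 ⊢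
  have hsub : Set.range (θ ∘ WittVector.teichmuller p) ⊆ fractionSubfield θ :=
    Set.range_subset_iff.2 fun x => map_mem_fractionSubfield θ _
  refine ⟨fractionSubfield θ, normsInPowers_fractionSubfield hθ hϖ hp0,
    Set.Subset.trans hroots hsub, fun I => ?_⟩
  refine HasGap.of_subfield (isClosed_fractionSubfield hθ hϖ hp0 hp1)
    ⟨(θ p)⁻¹, inv_mem (map_mem_fractionSubfield θ _), ?_⟩ (Set.Subset.trans hroots hsub) fun a => ?_
  · rw [norm_inv]
    exact (one_lt_inv₀ (norm_pos_iff.2 hp0)).2 hp1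
  · obtain ⟨n, b, hb⟩ := exists_forall_pow_mul_eq_map hϖ hp0 a
    refine HasGap.of_const_mul (pow_ne_zero n hp0) (HasGap.mono ?_ hroots)
    simp only [hb]
    rw [map_natCast] at hp0 hp1
    exact hasGap_range_teichmuller hθ hp0 hp1 I b

end Noetherian

section RootsOfUnityGap

variable {p : ℕ} [Fact p.Prime] {ι : Type*} [Finite ι]

theorem hasGap_isOfFinOrder_of_completeSpace {K : Type*} [NormedField K] [IsUltrametricDist K]
    [CompleteSpace K] (hp0 : (p : K) ≠ 0) (hp1 : ‖(p : K)‖ < 1) (I : Finset ι) (a : ι → K) :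
    HasGap I {ζ : K | IsOfFinOrder ζ} a := by
  obtain ⟨F, hF, hroots, hgap⟩ := exists_subfield_hasGap_primeToRoots (ι := ι) hp0 hp1
  have hroots' : primeToRoots K p ⊆ Set.range (algebraMap F K) := by
    rwa [show Set.range (algebraMap F K) = F from Subtype.range_val]
  let D := (⨆ M, cyclotomicLayer F K p M).toSubfield
  have hD : (D : Set K) = {x | ∃ M, x ∈ cyclotomicLayer F K p M} :=
    (IntermediateField.coe_iSup_of_directed cyclotomicLayer_mono.directed_le).trans
      (Set.ext fun x => Set.mem_iUnion)
  have hsub : {ζ : K | IsOfFinOrder ζ} ⊆ D.topologicalClosure := fun ζ hζ => by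
    obtain ⟨t, -, w, ⟨M, hw⟩, rfl⟩ := exists_algebraMap_mul_eq_of_isOfFinOrder hroots' hζ
    refine D.le_topologicalClosure (hD.ge ⟨M, ?_⟩)
    exact mul_mem ((cyclotomicLayer F K p M).algebraMap_mem t) (mem_cyclotomicLayer hw)
  refine HasGap.of_subfield D.isClosed_topologicalClosure
    ⟨(p : K)⁻¹, inv_mem (natCast_mem _ p), ?_⟩ hsub (fun b => ?_) a
  · rw [norm_inv]
    exact (one_lt_inv₀ (norm_pos_iff.2 hp0)).2 hp1
  · refine hasGap_of_mem_closure hF hp0 hp1 hroots' hgap (fun i => ?_) I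
    rw [← hD]
    exact (b i).2

theorem hasGap_isOfFinOrder {K : Type*} [NormedField K] [IsUltrametricDist K]
    (hp0 : (p : K) ≠ 0) (hp1 : ‖(p : K)‖ < 1) (I : Finset ι) (a : ι → K) :
    HasGap I {ζ : K | IsOfFinOrder ζ} a := by
  have : IsUltrametricDist (UniformSpace.Completion K) := IsUltrametricDist.of_normedAlgebra K
  let f := algebraMap K (UniformSpace.Completion K)
  have hp0' : (p : UniformSpace.Completion K) ≠ 0 := by
    rwa [← map_natCast f, Ne, map_eq_zero]
  have hp1' : ‖(p : UniformSpace.Completion K)‖ < 1 := by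
    rwa [← map_natCast f, norm_algebraMap']
  have hroots : Set.MapsTo f {ζ | IsOfFinOrder ζ} {ζ | IsOfFinOrder ζ} :=
    fun _ => f.toMonoidHom.isOfFinOrder
  have gap := hasGap_isOfFinOrder_of_completeSpace hp0' hp1' I fun i => f (a i)
  exact gap.of_map (continuous_algebraMap K _) f.injective hroots

end RootsOfUnityGap

end TateVoloch

theorem stmt10_general {p : ℕ} (hp : p.Prime) {K : Type*} [NormedField K] [IsUltrametricDist K]
    (hp0 : (p : K) ≠ 0) (hp1 : ‖(p : K)‖ < 1) {ι : Type*} [Fintype ι] (a : ι → K) :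
    ∃ c : ℝ, 0 < c ∧ ∀ ζ : ι → K, (∀ i, IsOfFinOrder (ζ i)) →
      (∑ i, ζ i * a i = 0 ∨ c ≤ ‖∑ i, ζ i * a i‖) := by
  have : Fact p.Prime := ⟨hp⟩
  simpa using TateVoloch.hasGap_iff.1 (TateVoloch.hasGap_isOfFinOrder hp0 hp1 Finset.univ a)

/-- Tate–Voloch: for every `n ≥ 1` and `a₁,…,a_n ∈ ℂ_p` there is `c > 0` such that for
all roots of unity `ζ₁,…,ζ_n` in `ℂ_p`, either `Σ ζᵢaᵢ = 0` or `|Σ ζᵢaᵢ|_p ≥ c`. -/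
theorem stmt10 {p : ℕ} (hp : p.Prime)
    {K : Type*} [NontriviallyNormedField K] [IsUltrametricDist K] [IsAlgClosed K]
    [CompleteSpace K] (hpnorm : ‖(p : K)‖ = (p : ℝ)⁻¹)
    (n : ℕ) (a : Fin n → K) :
    ∃ c : ℝ, 0 < c ∧ ∀ ζ : Fin n → K, (∀ i, IsOfFinOrder (ζ i)) →
      (∑ i, ζ i * a i = 0 ∨ c ≤ ‖∑ i, ζ i * a i‖) :=
  stmt10_general hp (norm_pos_iff.1 (hpnorm ▸ inv_pos.2 (Nat.cast_pos.2 hp.pos)))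
    (hpnorm.trans_lt (inv_lt_one_of_one_lt₀ (Nat.one_lt_cast.2 hp.one_lt))) a
end

section
/- Let p be a prime and F ∈ ℂ_p[X₁,…,X_n] a nonzero polynomial. Then inf(F) = inf{|F(ζ)|_p : ζ ∈ (μ_∞)^n with F(ζ) ≠ 0} is strictly positive, and setting c(F) = -log(inf(F)/|F|_p) we have c(F) ≥ 0. -/
/-- The `p`-adic Gauss norm of a multivariate polynomial. -/
noncomputable def mvGaussNorm {K : Type*} [NontriviallyNormedField K] {n : ℕ}
    (F : MvPolynomial (Fin n) K) : ℝ :=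
  ((F.support.sup fun d => ‖F.coeff d‖₊ : NNReal) : ℝ)

/-- `inf(F)`: the infimum of `|F(ζ)|_p` over torsion points `ζ ∈ (μ_∞)^n` with
`F(ζ) ≠ 0`. -/
noncomputable def infMv {K : Type*} [NontriviallyNormedField K] {n : ℕ}
    (F : MvPolynomial (Fin n) K) : ℝ :=
  sInf {r : ℝ | ∃ ζ : Fin n → Kˣ, (∀ i, IsOfFinOrder (ζ i)) ∧
    MvPolynomial.eval (fun i => (ζ i : K)) F ≠ 0 ∧
    r = ‖MvPolynomial.eval (fun i => (ζ i : K)) F‖}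

/-!
Expanding `F` into monomials turns `F(ζ)` into a linear form in roots of unity, so the point is the
Tate–Voloch theorem: the nonzero values of a linear form at tuples of roots of unity are bounded
away from zero. Every root of unity is a product `ε η` with `ε` of order prime to `p` and `η` of
`p`-power order. Embed the Witt vectors of a perfect field into the valuation ring so that each `ε`
is a Teichmüller representative. The Witt coefficients of a linear form in Teichmüller
representatives are polynomials in the residues, so by Hilbert's basis theorem the vanishing of
finitely many of them forces all of them to vanish, which is the claim for the `ε`. The `η` are
handled by induction on the number of terms, over the fraction field `L` of the Witt vectors and
for coefficients in the closure of `L(μ_{p^∞})`: if some `η` has large order, conjugating by the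
`p`-th roots of unity splits the sum into shorter sums, each at most `|p|⁻¹` times as large as the
whole; otherwise the `η` range over a finite set. Arbitrary coefficients reduce to this closed
subfield, since they span a finite-dimensional space over it.
-/

/-! ### Gaps of linear forms -/

/-- `ZeroGapOn f s`: the nonzero values of `f` on `s` are bounded away from zero. For a linear form
`f` and `s` the tuples of roots of unity this is the Tate–Voloch property of `f`. -/
def ZeroGapOn {α E : Type*} [NormedAddCommGroup E] (f : α → E) (s : Set α) : Prop :=
  ∃ δ > 0, ∀ x ∈ s, f x ≠ 0 → δ ≤ ‖f x‖

namespace ZeroGapOn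

variable {α β ι E F : Type*} [NormedAddCommGroup E] [NormedAddCommGroup F]

lemma of_forall_exists_norm_eq {f : α → E} {s : Set α} {g : β → F} {t : Set β}
    (hf : ZeroGapOn f s) (h : ∀ y ∈ t, ∃ x ∈ s, ‖g y‖ = ‖f x‖) : ZeroGapOn g t := by
  obtain ⟨δ, hδ, hfδ⟩ := hf
  refine ⟨δ, hδ, fun y hy hgy => ?_⟩
  obtain ⟨x, hx, hyx⟩ := h y hy
  rw [hyx]
  exact hfδ x hx (norm_ne_zero_iff.mp (hyx ▸ norm_ne_zero_iff.mpr hgy))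

lemma exists_common {S : Set ι} (hS : S.Finite) {f : ι → α → E} {t : ι → Set α}
    (h : ∀ i ∈ S, ZeroGapOn (f i) (t i)) :
    ∃ δ > 0, ∀ i ∈ S, ∀ x ∈ t i, f i x ≠ 0 → δ ≤ ‖f i x‖ := by
  induction S, hS using Set.Finite.induction_on with
  | empty => exact ⟨1, one_pos, by simp⟩
  | @insert i S _ _ ih =>
    obtain ⟨δ, hδ, hi⟩ := h i (Set.mem_insert i S)
    obtain ⟨δ', hδ', hS⟩ := ih fun j hj => h j (Set.mem_insert_of_mem i hj)
    refine ⟨min δ δ', lt_min hδ hδ', ?_⟩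
    rintro j (rfl | hj) x hx hne
    · exact (min_le_left _ _).trans (hi x hx hne)
    · exact (min_le_right _ _).trans (hS j hj x hx hne)

lemma pi [Fintype ι] {G : ι → Type*} [∀ i, NormedAddCommGroup (G i)] {f : α → ∀ i, G i}
    {s : Set α} (h : ∀ i, ZeroGapOn (fun x => f x i) s) : ZeroGapOn f s := by
  choose δ hδ hfδ using h
  obtain ⟨ε, hε, hεδ⟩ : ∃ ε > 0, ∀ i, ε ≤ δ i := by
    cases isEmpty_or_nonempty ι
    · exact ⟨1, one_pos, fun i => isEmptyElim i⟩
    · obtain ⟨i, hi⟩ := Finite.exists_min δ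
      exact ⟨δ i, hδ i, hi⟩
  refine ⟨ε, hε, fun x hx hfx => ?_⟩
  obtain ⟨i, hi⟩ := Function.ne_iff.mp hfx
  exact (hεδ i).trans ((hfδ i x hx hi).trans (norm_le_pi_norm (f x) i))

lemma of_comp_clm {L : Type*} [NontriviallyNormedField L] [NormedSpace L E] [NormedSpace L F]
    {f : α → E} {s : Set α} (T : E →L[L] F) (hT : Function.Injective T)
    (h : ZeroGapOn (fun x => T (f x)) s) : ZeroGapOn f s := by
  obtain ⟨δ, hδ, hTf⟩ := h
  refine ⟨δ / (‖T‖ + 1), by positivity, fun x hx hfx => ?_⟩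
  rw [div_le_iff₀' (by positivity)]
  calc δ ≤ ‖T (f x)‖ := hTf x hx ((map_ne_zero_iff T hT).mpr hfx)
    _ ≤ ‖T‖ * ‖f x‖ := T.le_opNorm _
    _ ≤ (‖T‖ + 1) * ‖f x‖ := by gcongr; exact le_add_of_nonneg_right zero_le_one

-- The coefficients span a finite-dimensional space over the complete field `L`, on which
-- coordinates are continuous.
lemma dotProduct_of_complete_subfield {L K : Type*} [NontriviallyNormedField L] [CompleteSpace L]
    [NormedField K] [NormedAlgebra L K] [Fintype ι] {s : Set (ι → L)}
    (h : ∀ c : ι → L, ZeroGapOn (fun x => c ⬝ᵥ x) s) (a : ι → K) :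
    ZeroGapOn (fun x => a ⬝ᵥ (algebraMap L K ∘ x)) s := by
  let V := Submodule.span L (Set.range a)
  have : FiniteDimensional L V := FiniteDimensional.span_of_finite L (Set.finite_range a)
  let b := Module.finBasis L V
  obtain ⟨a', ha'⟩ : ∃ a' : ι → V, ∀ i, (a' i : K) = a i :=
    ⟨fun i => ⟨a i, Submodule.subset_span ⟨i, rfl⟩⟩, fun _ => rfl⟩
  let v (x : ι → L) : V := ∑ i, x i • a' i
  have hv (x : ι → L) : a ⬝ᵥ (algebraMap L K ∘ x) = v x := by
    simp [v, ha', dotProduct, Algebra.smul_def, mul_comm]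
  have hcoord : ZeroGapOn (fun x => b.equivFunL (v x)) s := .pi fun j => by
    convert h fun i => b.equivFunL (a' i) j using 2 with x
    simp [v, dotProduct, mul_comm]
  have hgap : ZeroGapOn v s :=
    hcoord.of_comp_clm b.equivFunL.toContinuousLinearMap b.equivFunL.injective
  exact hgap.of_forall_exists_norm_eq fun x hx => ⟨x, hx, congrArg norm (hv x)⟩

end ZeroGapOn

/-! ### Splitting sums along `p`-power roots of unity -/

section Conjugates

variable {L K : Type*} [NontriviallyNormedField L] [CompleteSpace L] [IsUltrametricDist L]
  [NormedField K] [NormedAlgebra L K]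

lemma norm_eq_spectralValue_minpoly {x : K} (hx : IsAlgebraic L x) :
    ‖x‖ = spectralValue (minpoly L x) := by
  let y : algebraicClosure L K := ⟨x, mem_algebraicClosure_iff.mpr hx⟩
  have h : minpoly L x = minpoly L y :=
    minpoly.algebraMap_eq (algebraMap (algebraicClosure L K) K).injective y
  rw [h]
  exact NormedAlgebra.norm_eq_spectralNorm L y

lemma norm_eq_of_isConjRoot {x y : K} (hx : IsIntegral L x) (hxy : IsConjRoot L x y) :
    ‖x‖ = ‖y‖ := by
  rw [norm_eq_spectralValue_minpoly hx.isAlgebraic,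
    norm_eq_spectralValue_minpoly (hxy.isIntegral hx).isAlgebraic, hxy]

end Conjugates

section IsConjRoot

open Polynomial

variable {L K : Type*} [Field L] [Field K] [Algebra L K]

lemma isConjRoot_aeval {x y : K}
    (hx : IsIntegral L x) (hxy : IsConjRoot L x y) (g : L[X]) :
    IsConjRoot L (aeval x g) (aeval y g) := by
  refine isConjRoot_of_aeval_eq_zero
    (adjoin_le_integralClosure hx (aeval_mem_adjoin_singleton L x)) ?_
  rw [← aeval_comp]
  refine aeval_eq_zero_of_dvd_aeval_eq_zero (minpoly.dvd L x ?_) hxy.aeval_eq_zero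
  rw [aeval_comp, minpoly.aeval]

lemma isConjRoot_of_isPrimitiveRoot {n : ℕ}
    [NeZero (n : L)] (h : Irreducible (cyclotomic n L)) {x y : K} (hx : IsPrimitiveRoot x n)
    (hy : IsPrimitiveRoot y n) : IsConjRoot L x y := by
  rw [isConjRoot_def, ← hx.minpoly_eq_cyclotomic_of_irreducible h,
    ← hy.minpoly_eq_cyclotomic_of_irreducible h]

end IsConjRoot

section Kummer

open Polynomial

variable {ι K : Type*} [NormedField K] [IsUltrametricDist K]

lemma norm_natCast_mul_norm_sum_modEq_le {n : ℕ} (hn : n ≠ 0) {ξ : K} (hξ : IsPrimitiveRoot ξ n)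
    {s : Finset ι} {c : ι → K} {e : ι → ℕ} {B : ℝ}
    (hB : ∀ t : ℕ, ‖∑ i ∈ s, c i * (ξ ^ t) ^ e i‖ ≤ B) (j : ℕ) :
    ‖(n : K)‖ * ‖∑ i ∈ s with e i ≡ j [MOD n], c i‖ ≤ B := by
  have hξ0 : ξ ≠ 0 := hξ.ne_zero hn
  have hξ1 : ‖ξ‖ = 1 := (hξ.isOfFinOrder hn).norm_eq_one
  have horth (i : ι) : ∑ t ∈ Finset.range n, (ξ ^ e i / ξ ^ j) ^ t =
      if e i ≡ j [MOD n] then (n : K) else 0 := by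
    have hiff : ξ ^ e i / ξ ^ j = 1 ↔ e i ≡ j [MOD n] := by
      rw [div_eq_one_iff_eq (pow_ne_zero j hξ0),
        (hξ.isOfFinOrder hn).pow_eq_pow_iff_modEq, ← hξ.eq_orderOf]
    split_ifs with h
    · simp [hiff.mpr h]
    · rw [geom_sum_eq (mt hiff.mp h), div_pow, pow_right_comm, pow_right_comm ξ j,
        hξ.pow_eq_one]
      simp
  have hsum : (n : K) * ∑ i ∈ s with e i ≡ j [MOD n], c i =
      ∑ t ∈ Finset.range n, (ξ ^ j)⁻¹ ^ t * ∑ i ∈ s, c i * (ξ ^ t) ^ e i := by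
    calc (n : K) * ∑ i ∈ s with e i ≡ j [MOD n], c i
      _ = ∑ i ∈ s, c i * ∑ t ∈ Finset.range n, (ξ ^ e i / ξ ^ j) ^ t := by
        simp only [horth, mul_ite, mul_zero, Finset.sum_filter, Finset.mul_sum, mul_comm]
      _ = _ := by
        simp only [Finset.mul_sum]
        rw [Finset.sum_comm]
        refine Finset.sum_congr rfl fun t _ => Finset.sum_congr rfl fun i _ => ?_
        rw [div_pow, pow_right_comm]
        ring
  rw [← norm_mul, hsum]
  refine IsUltrametricDist.norm_sum_le_of_forall_le_of_nonneg ((norm_nonneg _).trans (hB 0))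
    fun t _ => ?_
  simpa [hξ1] using hB t

variable {L : Type*} [NontriviallyNormedField L] [CompleteSpace L] [IsUltrametricDist L]
  [NormedAlgebra L K]

-- Multiplying `θ` by a `p`-th root of unity `ξ ^ t` gives a conjugate of `θ` and fixes `θ ^ p`.
lemma norm_prime_mul_norm_sum_modEq_le {p m : ℕ} (hp : p.Prime) (hpL : (p : L) ≠ 0) (hm : m ≠ 0)
    (hirr : Irreducible (cyclotomic (p ^ (m + 1)) L)) {θ : K}
    (hθ : IsPrimitiveRoot θ (p ^ (m + 1))) {s : Finset ι} {b : ι → K} {e : ι → ℕ}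
    (hb : ∀ i, b i ∈ Algebra.adjoin L {θ ^ p}) (j : ℕ) :
    ‖(p : K)‖ * ‖∑ i ∈ s with e i ≡ j [MOD p], b i * θ ^ e i‖ ≤ ‖∑ i ∈ s, b i * θ ^ e i‖ := by
  have : NeZero ((p ^ (m + 1) : ℕ) : L) := ⟨by exact_mod_cast pow_ne_zero _ hpL⟩
  have hξ : IsPrimitiveRoot (θ ^ p ^ m) p := hθ.pow (pow_pos hp.pos _) (pow_succ p m)
  have hint : IsIntegral L θ := (hθ.isIntegral (pow_pos hp.pos _)).tower_top
  choose B hB using fun i => (Algebra.adjoin_singleton_eq_range_aeval L (θ ^ p)) ▸ hb i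
  let G : L[X] := ∑ i ∈ s, (B i).comp (X ^ p) * X ^ e i
  have hG (z : K) (hz : z ^ p = θ ^ p) : aeval z G = ∑ i ∈ s, b i * z ^ e i := by
    simp only [G, map_sum, map_mul, map_pow, aeval_X, aeval_comp, hz]
    exact Finset.sum_congr rfl fun i _ => congrArg (· * _) (hB i)
  have hconj (t : ℕ) : ‖∑ i ∈ s, b i * ((θ ^ p ^ m) ^ t * θ) ^ e i‖ =
      ‖∑ i ∈ s, b i * θ ^ e i‖ := by
    have hprim : IsPrimitiveRoot ((θ ^ p ^ m) ^ t * θ) (p ^ (m + 1)) := by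
      rw [← pow_mul, ← pow_succ]
      refine hθ.pow_of_coprime _ (.pow_right _ ?_)
      obtain ⟨d, rfl⟩ := Nat.exists_eq_succ_of_ne_zero hm
      rw [pow_succ', mul_assoc]
      exact (Nat.coprime_mul_left_add_left 1 p (p ^ d * t)).mpr p.coprime_one_left
    rw [← hG θ rfl, ← hG _ (by rw [mul_pow, pow_right_comm, hξ.pow_eq_one, one_pow, one_mul])]
    exact (norm_eq_of_isConjRoot
      (adjoin_le_integralClosure hint (aeval_mem_adjoin_singleton L θ))
      (isConjRoot_aeval hint (isConjRoot_of_isPrimitiveRoot hirr hθ hprim) G)).symm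
  refine norm_natCast_mul_norm_sum_modEq_le hp.ne_zero hξ (fun t => ?_) j
  rw [← hconj t]
  simp only [mul_pow]
  exact (congrArg norm (Finset.sum_congr rfl fun i _ => by ring)).le

end Kummer

/-- The `p`-power roots of unity `μ_{p^∞}` of `K`. -/
def primePowerRoots (K : Type*) [Monoid K] (p : ℕ) : Set K := {η | ∃ m, η ^ p ^ m = 1}

section PrimePowerRoots

variable {K : Type*} [Field K] {p : ℕ}

lemma exists_isPrimitiveRoot_and_forall_eq_pow (hp : p.Prime) {ι : Type*} {s : Finset ι}
    (hs : s.Nonempty) {η : ι → K} (hη : ∀ i ∈ s, η i ∈ primePowerRoots K p) :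
    ∃ i₁ ∈ s, ∃ k, IsPrimitiveRoot (η i₁) (p ^ k) ∧ ∀ i ∈ s, ∃ e : ℕ, η i₁ ^ e = η i := by
  have hord (i : ι) (hi : i ∈ s) : ∃ k, orderOf (η i) = p ^ k := by
    have := Fact.mk hp
    exact exists_orderOf_eq_prime_pow_iff.mpr (hη i hi)
  obtain ⟨i₁, hi₁, hmax⟩ := s.exists_max_image (fun i => orderOf (η i)) hs
  obtain ⟨k, hk⟩ := hord i₁ hi₁
  have hprim : IsPrimitiveRoot (η i₁) (p ^ k) := hk ▸ .orderOf (η i₁)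
  have : NeZero (p ^ k) := ⟨pow_ne_zero k hp.ne_zero⟩
  refine ⟨i₁, hi₁, k, hprim, fun i hi => ?_⟩
  obtain ⟨l, hl⟩ := hord i hi
  have hlk : p ^ l ≤ p ^ k := hl ▸ hk ▸ hmax i hi
  obtain ⟨e, -, he⟩ := hprim.eq_pow_of_pow_eq_one (orderOf_dvd_iff_pow_eq_one.mp
    (hl ▸ pow_dvd_pow p ((Nat.pow_le_pow_iff_right hp.one_lt).mp hlk)))
  exact ⟨e, he⟩

lemma eventually_mem_adjoin_of_isPrimitiveRoot (hp : p.Prime) {L : Type*} [Field L]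
    [Algebra L K] {x : K} (hx : x ∈ Algebra.adjoin L (primePowerRoots K p)) :
    ∀ᶠ m in Filter.atTop, ∀ θ : K, IsPrimitiveRoot θ (p ^ m) → x ∈ Algebra.adjoin L {θ} := by
  induction hx using Algebra.adjoin_induction with
  | algebraMap a => exact .of_forall fun m θ _ => Subalgebra.algebraMap_mem _ a
  | mem η hη =>
    obtain ⟨r, hr⟩ := hη
    filter_upwards [Filter.eventually_ge_atTop r] with m hm θ hθ
    have : NeZero (p ^ m) := ⟨pow_ne_zero m hp.ne_zero⟩
    obtain ⟨e, -, rfl⟩ := hθ.eq_pow_of_pow_eq_one (orderOf_dvd_iff_pow_eq_one.mp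
      ((orderOf_dvd_of_pow_eq_one hr).trans (pow_dvd_pow p hm)))
    exact pow_mem (Algebra.self_mem_adjoin_singleton L θ) e
  | add x y _ _ ihx ihy =>
    filter_upwards [ihx, ihy] with m hx hy θ hθ using add_mem (hx θ hθ) (hy θ hθ)
  | mul x y _ _ ihx ihy =>
    filter_upwards [ihx, ihy] with m hx hy θ hθ using mul_mem (hx θ hθ) (hy θ hθ)

end PrimePowerRoots

lemma sum_eq_zero_of_sum_modEq_eq_zero {ι M : Type*} [AddCommMonoid M] {s : Finset ι} {f : ι → M}
    {n : ℕ} (hn : n ≠ 0) {e : ι → ℕ} (h : ∀ j, ∑ i ∈ s with e i ≡ j [MOD n], f i = 0) :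
    ∑ i ∈ s, f i = 0 := by
  rw [← Finset.sum_fiberwise_of_maps_to (g := fun i => e i % n) (t := Finset.range n)
    fun i _ => Finset.mem_range.mpr (Nat.mod_lt _ hn.bot_lt)]
  refine Finset.sum_eq_zero fun j hj => ?_
  simpa only [Nat.ModEq, Nat.mod_eq_of_lt (Finset.mem_range.mp hj)] using h j

lemma norm_eq_one_of_mem_primePowerRoots {K : Type*} [NormedField K] {p : ℕ} (hp : p.Prime)
    {η : K} (hη : η ∈ primePowerRoots K p) : ‖η‖ = 1 := by
  obtain ⟨m, hm⟩ := hη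
  exact (isOfFinOrder_iff_pow_eq_one.mpr ⟨p ^ m, pow_pos hp.pos m, hm⟩).norm_eq_one

section Splitting

variable {ι L K : Type*} [NontriviallyNormedField L] [CompleteSpace L] [IsUltrametricDist L]
  [NormedField K] [IsUltrametricDist K] [NormedAlgebra L K] {p : ℕ}

lemma exists_modEq_splitting_of_mem_adjoin (hp : p.Prime) (hpL : (p : L) ≠ 0)
    (hcyc : ∀ m, Irreducible (Polynomial.cyclotomic (p ^ (m + 1)) L))
    {s : Finset ι} {b η : ι → K} {r : ℕ} (hr : r ≠ 0)
    (hb : ∀ m ≥ r, ∀ θ : K, IsPrimitiveRoot θ (p ^ m) → ∀ i, b i ∈ Algebra.adjoin L {θ})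
    (hη : ∀ i, η i ∈ primePowerRoots K p) {i₀ : ι} (hi₀ : i₀ ∈ s) (hη₀ : η i₀ = 1)
    (hηr : ∃ i ∈ s, η i ^ p ^ r ≠ 1) :
    ∃ e : ι → ℕ, (∀ j, {i ∈ s | e i ≡ j [MOD p]} ⊂ s) ∧
      ∀ j, ‖(p : K)‖ * ‖∑ i ∈ s with e i ≡ j [MOD p], b i * η i‖ ≤ ‖∑ i ∈ s, b i * η i‖ := by
  obtain ⟨i₁, hi₁, k, hθ, he⟩ :=
    exists_isPrimitiveRoot_and_forall_eq_pow hp ⟨i₀, hi₀⟩ fun i _ => hη i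
  choose! e he using he
  have hrk : r < k := by
    by_contra! hkr
    obtain ⟨i, hi, hne⟩ := hηr
    refine hne ?_
    rw [← he i hi, pow_right_comm, (hθ.pow_eq_one_iff_dvd _).mpr (pow_dvd_pow p hkr), one_pow]
  obtain ⟨m, rfl⟩ := Nat.exists_eq_succ_of_ne_zero (Nat.ne_zero_of_lt hrk)
  have hmod {i : ι} (hi : i ∈ s) {d : ℕ} (hd : η i₁ ^ d = η i) : e i ≡ d [MOD p] := by
    refine Nat.ModEq.of_dvd (dvd_pow_self p m.succ_ne_zero) ?_
    rw [hθ.eq_orderOf, ← (hθ.isOfFinOrder (pow_ne_zero _ hp.ne_zero)).pow_eq_pow_iff_modEq,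
      he i hi, hd]
  refine ⟨e, fun j => Finset.filter_ssubset.mpr ?_, fun j => ?_⟩
  · by_contra! hall
    have h01 : 0 ≡ 1 [MOD p] := calc
      0 ≡ e i₀ [MOD p] := (hmod hi₀ (by rw [pow_zero, hη₀])).symm
      _ ≡ j [MOD p] := hall i₀ hi₀
      _ ≡ e i₁ [MOD p] := (hall i₁ hi₁).symm
      _ ≡ 1 [MOD p] := hmod hi₁ (pow_one _)
    exact hp.one_lt.ne' (Nat.dvd_one.mp ((Nat.modEq_iff_dvd' zero_le_one).mp h01))
  · have hθp : IsPrimitiveRoot (η i₁ ^ p) (p ^ m) := hθ.pow (pow_pos hp.pos _) (pow_succ' p m)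
    have hm : r ≤ m := Nat.lt_succ_iff.mp hrk
    have hsum {t : Finset ι} (ht : t ⊆ s) :
        ∑ i ∈ t, b i * η i = ∑ i ∈ t, b i * η i₁ ^ e i :=
      Finset.sum_congr rfl fun i hi => by rw [he i (ht hi)]
    rw [hsum (Finset.filter_subset _ s), hsum subset_rfl]
    exact norm_prime_mul_norm_sum_modEq_le hp hpL (by omega) (hcyc m) hθ (hb m hm _ hθp) j

lemma exists_modEq_splitting_of_mem_closure [Finite ι] (hp : p.Prime) (hpL : (p : L) ≠ 0)
    (hcyc : ∀ m, Irreducible (Polynomial.cyclotomic (p ^ (m + 1)) L)) {a : ι → K}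
    (ha : ∀ i, a i ∈ closure (Algebra.adjoin L (primePowerRoots K p) : Set K)) {δ : ℝ}
    (hδ : 0 < δ) {s : Finset ι} {i₀ : ι} (hi₀ : i₀ ∈ s) :
    ∃ r, ∀ ε η : ι → K, (∀ i, ε i ∈ Set.range (algebraMap L K)) → (∀ i, ‖ε i‖ ≤ 1) →
      (∀ i, η i ∈ primePowerRoots K p) → η i₀ = 1 → (∃ i ∈ s, η i ^ p ^ r ≠ 1) →
      ∃ e : ι → ℕ, (∀ j, {i ∈ s | e i ≡ j [MOD p]} ⊂ s) ∧
        ∀ j, ‖(p : K)‖ * ‖∑ i ∈ s with e i ≡ j [MOD p], a i * ε i * η i‖ ≤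
          max ‖∑ i ∈ s, a i * ε i * η i‖ δ := by
  choose a' ha' hδa using fun i => Metric.mem_closure_iff.mp (ha i) δ hδ
  obtain ⟨r, hr⟩ := Filter.eventually_atTop.mp (Filter.eventually_all.mpr fun i =>
    eventually_mem_adjoin_of_isPrimitiveRoot hp (ha' i))
  refine ⟨r + 1, fun ε η hεL hε hη hη₀ hηr => ?_⟩
  have hmem (m : ℕ) (hm : m ≥ r + 1) (θ : K) (hθ : IsPrimitiveRoot θ (p ^ m)) (i : ι) :
      a' i * ε i ∈ Algebra.adjoin L {θ} := by
    obtain ⟨w, hw⟩ := hεL i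
    exact mul_mem (hr m (by omega) i θ hθ) (hw ▸ Subalgebra.algebraMap_mem _ w)
  obtain ⟨e, hes, he⟩ :=
    exists_modEq_splitting_of_mem_adjoin hp hpL hcyc r.succ_ne_zero hmem hη hi₀ hη₀ hηr
  have happrox (t : Finset ι) :
      ‖∑ i ∈ t, a i * ε i * η i - ∑ i ∈ t, a' i * ε i * η i‖ ≤ δ := by
    rw [← Finset.sum_sub_distrib]
    refine IsUltrametricDist.norm_sum_le_of_forall_le_of_nonneg hδ.le fun i _ => ?_
    rw [← sub_mul, ← sub_mul, norm_mul, norm_mul,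
      norm_eq_one_of_mem_primePowerRoots hp (hη i), mul_one]
    exact (mul_le_of_le_one_right (norm_nonneg _) (hε i)).trans
      (dist_eq_norm (a i) (a' i) ▸ (hδa i).le)
  have hle (x y : K) (h : ‖x - y‖ ≤ δ) : ‖x‖ ≤ max ‖y‖ δ := by
    simpa [max_comm] using (IsUltrametricDist.norm_add_le_max (x - y) y).trans
      (max_le_max_right _ h)
  have hp1 : ‖(p : K)‖ ≤ 1 := IsUltrametricDist.norm_natCast_le_one K p
  refine ⟨e, hes, fun j => ?_⟩
  calc ‖(p : K)‖ * ‖∑ i ∈ s with e i ≡ j [MOD p], a i * ε i * η i‖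
    _ ≤ ‖(p : K)‖ * max ‖∑ i ∈ s with e i ≡ j [MOD p], a' i * ε i * η i‖ δ := by
      gcongr; exact hle _ _ (happrox _)
    _ ≤ max ‖∑ i ∈ s, a' i * ε i * η i‖ δ := by
      rw [mul_max_of_nonneg _ _ (norm_nonneg _)]
      exact max_le_max (he j) (mul_le_of_le_one_left hδ.le hp1)
    _ ≤ max ‖∑ i ∈ s, a i * ε i * η i‖ δ :=
      max_le (hle _ _ ((norm_sub_rev _ _).trans_le (happrox s))) (le_max_right _ _)

end Splitting

lemma div_mem_primePowerRoots {M : Type*} [DivisionCommMonoid M] {p : ℕ} {x y : M}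
    (hx : x ∈ primePowerRoots M p) (hy : y ∈ primePowerRoots M p) :
    x / y ∈ primePowerRoots M p := by
  obtain ⟨m, hm⟩ := hx
  obtain ⟨n, hn⟩ := hy
  refine ⟨m + n, ?_⟩
  rw [div_pow, pow_add, pow_mul, hm, one_pow, mul_comm, pow_mul, hn, one_pow, div_one]

section Induction

variable {ι K : Type*} [NormedField K]

lemma zeroGapOn_sum_of_finite [Fintype ι] {E : Set K}
    (hE : ∀ a : ι → K, ZeroGapOn (fun ε => a ⬝ᵥ ε) {ε | ∀ i, ε i ∈ E}) (a : ι → K)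
    (s : Finset ι) {Z : Set K} (hZ : Z.Finite) :
    ZeroGapOn (fun x : (ι → K) × (ι → K) => ∑ i ∈ s, a i * x.1 i * x.2 i)
      {x | (∀ i, x.1 i ∈ E) ∧ ∀ i ∈ s, x.2 i ∈ Z} := by
  classical
  have hfin : {η : ι → K | ∀ i, η i ∈ insert 0 Z}.Finite := by
    simpa only [Set.pi, Set.mem_univ, true_imp_iff] using Set.Finite.pi' fun _ => hZ.insert 0
  obtain ⟨δ, hδ, h⟩ := ZeroGapOn.exists_common hfin fun η _ => hE (a * η)
  refine ⟨δ, hδ, fun x hx hne => ?_⟩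
  have hsum : ∑ i ∈ s, a i * x.1 i * x.2 i =
      (a * fun i => if i ∈ s then x.2 i else 0) ⬝ᵥ x.1 := by
    simp [dotProduct, Finset.sum_ite_mem, mul_right_comm]
  simp only [hsum] at hne ⊢
  refine h _ (fun i => ?_) x.1 hx.1 hne
  split_ifs with hi
  · exact Set.mem_insert_of_mem 0 (hx.2 i hi)
  · exact Set.mem_insert 0 Z

lemma zeroGapOn_sum_of_modEq_splitting {α : Type*} {p : ℕ} (hpK : (p : K) ≠ 0) {s : Finset ι}
    {f : α → ι → K} {S : Set α} (hssub : ∀ t ⊂ s, ZeroGapOn (fun x => ∑ i ∈ t, f x i) S)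
    (hsplit : ∀ δ > 0, ∃ S₀, ZeroGapOn (fun x => ∑ i ∈ s, f x i) S₀ ∧
      ∀ x ∈ S, x ∉ S₀ → ∃ e : ι → ℕ, (∀ j, {i ∈ s | e i ≡ j [MOD p]} ⊂ s) ∧
        ∀ j, ‖(p : K)‖ * ‖∑ i ∈ s with e i ≡ j [MOD p], f x i‖ ≤ max ‖∑ i ∈ s, f x i‖ δ) :
    ZeroGapOn (fun x => ∑ i ∈ s, f x i) S := by
  classical
  have hp0 : p ≠ 0 := fun h => hpK (by rw [h, Nat.cast_zero])
  obtain ⟨c, hc, hgap⟩ := ZeroGapOn.exists_common s.ssubsets.finite_toSet fun t ht =>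
    hssub t (Finset.mem_ssubsets.mp ht)
  have hpc : 0 < ‖(p : K)‖ * c := mul_pos (norm_pos_iff.mpr hpK) hc
  obtain ⟨S₀, ⟨δ₀, hδ₀, hS₀⟩, hS⟩ := hsplit (‖(p : K)‖ * c / 2) (half_pos hpc)
  refine ⟨min δ₀ (‖(p : K)‖ * c), lt_min hδ₀ hpc, fun x hx hne => ?_⟩
  by_cases hx₀ : x ∈ S₀
  · exact (min_le_left _ _).trans (hS₀ x hx₀ hne)
  obtain ⟨e, hes, he⟩ := hS x hx hx₀
  refine (min_le_right _ _).trans ?_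
  by_contra! hlt
  refine hne (sum_eq_zero_of_sum_modEq_eq_zero hp0 (e := e) fun j => ?_)
  by_contra hj
  have hcj := hgap _ (Finset.mem_coe.mpr (Finset.mem_ssubsets.mpr (hes j))) x hx hj
  have : ‖(p : K)‖ * c < ‖(p : K)‖ * c :=
    calc ‖(p : K)‖ * c
      _ ≤ ‖(p : K)‖ * ‖∑ i ∈ s with e i ≡ j [MOD p], f x i‖ := by gcongr
      _ ≤ max ‖∑ i ∈ s, f x i‖ (‖(p : K)‖ * c / 2) := he j
      _ < ‖(p : K)‖ * c := max_lt hlt (half_lt_self hpc)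
  exact this.false

variable [IsUltrametricDist K] {L : Type*} [NontriviallyNormedField L] [CompleteSpace L]
  [IsUltrametricDist L] [NormedAlgebra L K]

theorem zeroGapOn_sum_of_mem_closure_adjoin [Fintype ι] {p : ℕ} (hp : p.Prime)
    (hpL : (p : L) ≠ 0) (hcyc : ∀ m, Irreducible (Polynomial.cyclotomic (p ^ (m + 1)) L))
    {E : Set K} (hEL : E ⊆ Set.range (algebraMap L K)) (hE1 : ∀ ε ∈ E, ‖ε‖ ≤ 1)
    (hE : ∀ a : ι → K, ZeroGapOn (fun ε => a ⬝ᵥ ε) {ε | ∀ i, ε i ∈ E}) {a : ι → K}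
    (ha : ∀ i, a i ∈ closure (Algebra.adjoin L (primePowerRoots K p) : Set K)) (s : Finset ι) :
    ZeroGapOn (fun x : (ι → K) × (ι → K) => ∑ i ∈ s, a i * x.1 i * x.2 i)
      {x | (∀ i, x.1 i ∈ E) ∧ ∀ i, x.2 i ∈ primePowerRoots K p} := by
  induction s using Finset.strongInduction with | H s ih =>
  have hpK : (p : K) ≠ 0 := by
    rw [← map_natCast (algebraMap L K)]
    exact (map_ne_zero _).mpr hpL
  obtain rfl | ⟨i₀, hi₀⟩ := s.eq_empty_or_nonempty
  · exact ⟨1, one_pos, by simp⟩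
  suffices hnormalized : ZeroGapOn (fun x : (ι → K) × (ι → K) => ∑ i ∈ s, a i * x.1 i * x.2 i)
      {x | (∀ i, x.1 i ∈ E) ∧ (∀ i, x.2 i ∈ primePowerRoots K p) ∧ x.2 i₀ = 1} by
    refine hnormalized.of_forall_exists_norm_eq fun x hx => ?_
    have hx₀ : ‖x.2 i₀‖ = 1 := norm_eq_one_of_mem_primePowerRoots hp (hx.2 i₀)
    refine ⟨(x.1, fun i => x.2 i / x.2 i₀), ⟨hx.1, fun i =>
      div_mem_primePowerRoots (hx.2 i) (hx.2 i₀), div_self (norm_ne_zero_iff.mp ?_)⟩, ?_⟩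
    · rw [hx₀]; exact one_ne_zero
    · simp only [← mul_div_assoc, ← Finset.sum_div, norm_div, hx₀, div_one]
  refine zeroGapOn_sum_of_modEq_splitting hpK (fun t ht =>
    (ih t ht).of_forall_exists_norm_eq fun x hx => ⟨x, ⟨hx.1, hx.2.1⟩, rfl⟩) fun δ hδ => ?_
  obtain ⟨r, hr⟩ := exists_modEq_splitting_of_mem_closure hp hpL hcyc ha hδ hi₀
  refine ⟨_, zeroGapOn_sum_of_finite hE a s (Z := {η | η ^ p ^ r = 1}) ?_, fun x hx hx₀ => ?_⟩
  · exact (Polynomial.nthRootsFinset (p ^ r) (1 : K)).finite_toSet.subset fun η hη =>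
      (Polynomial.mem_nthRootsFinset (pow_pos hp.pos r) 1).mpr hη
  · refine hr x.1 x.2 (fun i => hEL (hx.1 i)) (fun i => hE1 _ (hx.1 i)) hx.2.1 hx.2.2 ?_
    by_contra! hall
    exact hx₀ ⟨hx.1, hall⟩

end Induction

/-! ### Witt vectors inside complete `p`-adic fields -/

section Integers

open NormedField Valuation Ideal Metric Filter Topology

variable {K O : Type*} [NormedField K] [IsUltrametricDist K] [CommRing O] [Algebra O K] {ϖ : O}

lemma mem_span_singleton_pow_iff_norm_le (hO : (valuation (K := K)).Integers O)
    {x : O} {n : ℕ} :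
    x ∈ span {ϖ} ^ n ↔ ‖algebraMap O K x‖ ≤ ‖algebraMap O K ϖ‖ ^ n := by
  rw [span_singleton_pow, mem_span_singleton, hO.dvd_iff_le]
  simp [← NNReal.coe_le_coe, valuation_apply]

lemma isAdicComplete_iff_completeSpace (hO : (valuation (K := K)).Integers O)
    (hϖ₀ : algebraMap O K ϖ ≠ 0) (hϖ₁ : ‖algebraMap O K ϖ‖ < 1) :
    IsAdicComplete (span {ϖ}) O ↔ CompleteSpace K := by
  let _ := NormedCommRing.induced O K (algebraMap O K) hO.hom_inj
  have hnorm (x : O) : ‖algebraMap O K x‖ = ‖x‖ := rfl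
  have hmem (n : ℕ) : ((span {ϖ} ^ n : Ideal O) : Set O) = closedBall 0 (‖ϖ‖ ^ n) := by
    ext x
    rw [SetLike.mem_coe, mem_span_singleton_pow_iff_norm_le hO, mem_closedBall_zero_iff,
      hnorm, hnorm]
  have hadic : IsAdic (span {ϖ}) := by
    refine isAdic_iff.mpr ⟨fun n => ?_, fun s hs => ?_⟩
    · have hball : closedBall 0 (‖ϖ‖ ^ n) ∈ 𝓝 (0 : O) :=
        closedBall_mem_nhds 0 (pow_pos (norm_pos_iff.mpr hϖ₀) n)
      rw [← hmem] at hball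
      exact (span {ϖ} ^ n).toAddSubgroup.isOpen_of_mem_nhds hball
    · obtain ⟨r, hr, hrs⟩ := nhds_basis_closedBall.mem_iff.mp hs
      obtain ⟨n, hn⟩ := exists_pow_lt_of_lt_one hr hϖ₁
      exact ⟨n, hmem n ▸ (closedBall_subset_closedBall hn.le).trans hrs⟩
  have hisom : Isometry (algebraMap O K) := AddMonoidHomClass.isometry_of_norm _ hnorm
  have hrange : Set.range (algebraMap O K) = closedBall 0 1 := by
    ext x
    rw [mem_closedBall_zero_iff]
    exact ⟨by rintro ⟨y, rfl⟩; exact hO.map_le_one y, fun hx => hO.exists_of_le_one hx⟩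
  rw [hadic.isAdicComplete_iff, and_iff_left (inferInstanceAs (T2Space O)),
    completeSpace_iff_isComplete_closedBall, ← hrange,
    completeSpace_iff_isComplete_range hisom.isUniformInducing]

lemma integers_of_valuationRing [IsDomain O] [ValuationRing O] [IsFractionRing O K]
    (h1 : ∀ x : O, ‖algebraMap O K x‖ ≤ 1)
    (hunit : ∀ x : O, ‖algebraMap O K x‖ = 1 → IsUnit x) :
    (valuation (K := K)).Integers O where
  hom_inj := IsFractionRing.injective O K
  map_le_one := h1
  exists_of_le_one y hy := by
    obtain hy' | ⟨x, hx⟩ := ValuationRing.isInteger_or_isInteger O y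
    · exact hy'
    obtain rfl | hy0 := eq_or_ne y 0
    · exact ⟨0, map_zero _⟩
    have hx1 : ‖algebraMap O K x‖ = 1 := by
      refine (h1 x).antisymm ?_
      rw [hx, norm_inv]
      exact (one_le_inv₀ (norm_pos_iff.mpr hy0)).mpr hy
    obtain ⟨u, rfl⟩ := hunit x hx1
    refine ⟨↑u⁻¹, ?_⟩
    rw [← inv_inv y, ← hx, map_units_inv]

end Integers

section PeriodicPts

open Function

lemma exists_periodicPts_mul_primePowerRoots_eq {G : Type*} [CommGroupWithZero G] {p : ℕ}
    (hp : p ≠ 0) {x : G} (hx : IsOfFinOrder x) :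
    ∃ ε ∈ periodicPts (fun y : G => y ^ p), ∃ η ∈ primePowerRoots G p, ε * η = x := by
  obtain ⟨a, b, hab, hxab⟩ := hx.finite_powers.exists_lt_map_eq_of_forall_mem
    (f := fun n : ℕ => (fun y : G => y ^ p)^[n] x) fun n => by
      exact ⟨p ^ n, by simp only [pow_iterate]⟩
  have hper : (fun y : G => y ^ p)^[a] x ∈ periodicPts (fun y : G => y ^ p) := by
    refine mk_mem_periodicPts (Nat.sub_pos_of_lt hab) ?_
    rw [IsPeriodicPt, IsFixedPt, ← iterate_add_apply, Nat.sub_add_cancel hab.le]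
    exact hxab.symm
  obtain ⟨ε, hε, hεx⟩ := ((bijOn_periodicPts (fun y : G => y ^ p)).iterate a).surjOn hper
  simp only [pow_iterate] at hεx
  have hx0 : x ^ p ^ a ≠ 0 := pow_ne_zero _ hx.isUnit.ne_zero
  have hε0 : ε ≠ 0 := ne_zero_pow (pow_ne_zero a hp) (hεx ▸ hx0)
  exact ⟨ε, hε, x / ε, ⟨a, by rw [div_pow, hεx, div_self hx0]⟩, mul_div_cancel₀ x hε0⟩

lemma map_mem_periodicPts_pow {M N F : Type*} [Monoid M] [Monoid N] [FunLike F M N]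
    [MonoidHomClass F M N] (f : F) {p : ℕ} {x : M} (hx : x ∈ periodicPts (fun y : M => y ^ p)) :
    f x ∈ periodicPts (fun y : N => y ^ p) := by
  obtain ⟨m, hm, hxm⟩ := hx
  exact ⟨m, hm, hxm.map fun y => map_pow f y p⟩

lemma eq_of_mem_periodicPts_of_dvd_sub {A : Type*} [CommRing A] {p : ℕ}
    [IsHausdorff (Ideal.span {(p : A)}) A] {x y : A} (hx : x ∈ periodicPts (fun z : A => z ^ p))
    (hy : y ∈ periodicPts (fun z : A => z ^ p)) (hxy : (p : A) ∣ x - y) : x = y := by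
  obtain ⟨m, hm, hxm⟩ := hx
  obtain ⟨n, hn, hyn⟩ := hy
  have hpow {k : ℕ} {z : A} (hz : IsPeriodicPt (fun z : A => z ^ p) k z) (l : ℕ) :
      z ^ p ^ (k * l) = z := by
    simpa only [pow_iterate] using (hz.mul_const l).eq
  refine sub_eq_zero.mp (IsHausdorff.haus ‹_› _ fun k => ?_)
  rw [SModEq.zero, smul_eq_mul, Ideal.mul_top, Ideal.span_singleton_pow, Ideal.mem_span_singleton]
  have hk : k ≤ n * (m * k) + 1 := by
    rw [← mul_assoc]
    exact (Nat.le_mul_of_pos_left k (Nat.mul_pos hn hm)).trans (Nat.le_succ _)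
  have hdvd := dvd_sub_pow_of_dvd_sub hxy (m * (n * k))
  rw [hpow hxm, mul_left_comm, hpow hyn] at hdvd
  exact (pow_dvd_pow _ hk).trans hdvd

variable {A : Type*} [CommRing A]

/-- The subring of `A` of elements fixed by a power of the ring endomorphism `f`. For the Frobenius
of the valuation ring of a `p`-adic field modulo `p`, it is the algebraic part of the residue field
over the prime field, and contains the reductions of the roots of unity of order prime to `p`. -/
def periodicSubring (f : A →+* A) : Subring A where
  carrier := periodicPts f
  mul_mem' := by
    rintro x y ⟨m, hm, hx⟩ ⟨n, hn, hy⟩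
    refine ⟨m * n, Nat.mul_pos hm hn, ?_⟩
    rw [IsPeriodicPt, IsFixedPt, iterate_map_mul, hx.mul_const n, hy.const_mul m]
  one_mem' := ⟨1, one_pos, map_one f⟩
  add_mem' := by
    rintro x y ⟨m, hm, hx⟩ ⟨n, hn, hy⟩
    refine ⟨m * n, Nat.mul_pos hm hn, ?_⟩
    rw [IsPeriodicPt, IsFixedPt, iterate_map_add, hx.mul_const n, hy.const_mul m]
  zero_mem' := ⟨1, one_pos, map_zero f⟩
  neg_mem' := by
    rintro x ⟨m, hm, hx⟩
    exact ⟨m, hm, by rw [IsPeriodicPt, IsFixedPt, iterate_map_neg, hx]⟩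

variable {p : ℕ} [Fact p.Prime] [CharP A p]

instance perfectRing_periodicSubring :
    PerfectRing (periodicSubring (frobenius A p)) p where
  bijective_frobenius := by
    have h := bijOn_periodicPts (frobenius A p)
    exact h.bijective

lemma isField_periodicSubring_frobenius [Nontrivial A] (hA : ∀ x : A, IsUnit x ∨ IsNilpotent x) :
    IsField (periodicSubring (frobenius A p)) where
  exists_pair_ne := ⟨0, 1, zero_ne_one⟩
  mul_comm := mul_comm
  mul_inv_cancel := by
    rintro ⟨x, m, hm, hx⟩ hx0
    obtain ⟨u, rfl⟩ | ⟨j, hj⟩ := hA x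
    · refine ⟨⟨↑u⁻¹, m, hm, u.isUnit.mul_left_cancel ?_⟩, Subtype.ext u.mul_inv⟩
      rw [u.mul_inv, ← iterate_map_one (frobenius A p) m, ← u.mul_inv, iterate_map_mul, hx]
    · refine absurd (Subtype.ext ?_) hx0
      have hperiod : x ^ p ^ (m * j) = x := by
        simpa only [iterate_frobenius] using (hx.mul_const j).eq
      refine hperiod.symm.trans (pow_eq_zero_of_le ?_ hj)
      exact (Nat.le_mul_of_pos_left j hm).trans (Nat.lt_pow_self (Fact.out : p.Prime).one_lt).le

end PeriodicPts

section Embedding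

open Function

universe u

theorem exists_wittVector_ringHom_teichmuller_eq {p : ℕ} [Fact p.Prime] {O : Type u} [CommRing O]
    [Fact (¬ IsUnit (p : O))] [IsAdicComplete (Ideal.span {(p : O)}) O]
    (hO : ∀ x : O, IsUnit x ∨ ∃ j : ℕ, (p : O) ∣ x ^ j) :
    ∃ (k : Type u) (_ : Field k) (_ : CharP k p) (_ : PerfectRing k p) (θ : WittVector p k →+* O),
      ∀ ε ∈ periodicPts (fun x : O => x ^ p), ∃ x : k, θ (WittVector.teichmuller p x) = ε := by
  have hmodP (x : ModP O p) : IsUnit x ∨ IsNilpotent x := by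
    obtain ⟨y, rfl⟩ := Ideal.Quotient.mk_surjective x
    refine (hO y).imp (fun hy => hy.map _) fun ⟨j, hj⟩ => ⟨j, ?_⟩
    rwa [← map_pow, Ideal.Quotient.eq_zero_iff_mem, Ideal.mem_span_singleton]
  let k := periodicSubring (frobenius (ModP O p) p)
  let _ : Field k := (isField_periodicSubring_frobenius hmodP).toField
  have : CharP k p := RingHom.charP k.subtype Subtype.val_injective p
  let lift : k →+* PreTilt O p := Perfection.lift p k (ModP O p) k.subtype
  have hlift (x : k) : PreTilt.coeff 0 (lift x) = x :=
    DFunLike.congr_fun ((Perfection.lift p k (ModP O p)).symm_apply_apply k.subtype) x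
  let θ := (WittVector.fontaineTheta O p).comp (WittVector.map lift)
  have hθ (x : k) : Ideal.Quotient.mk (Ideal.span {(p : O)}) (θ (WittVector.teichmuller p x)) =
      x := by
    rw [RingHom.comp_apply, WittVector.mk_fontaineTheta, WittVector.map_teichmuller,
      WittVector.teichmuller_coeff_zero, hlift]
  have hperiodic (x : k) : x ∈ periodicPts (fun y : k => y ^ p) := by
    obtain ⟨m, hm, hxm⟩ := x.2
    refine ⟨m, hm, Subtype.ext ?_⟩
    simpa only [pow_iterate, iterate_frobenius, Subring.coe_pow] using hxm.eq
  refine ⟨k, inferInstance, inferInstance, inferInstance, θ, fun ε hε => ?_⟩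
  let x : k := ⟨Ideal.Quotient.mk _ ε, map_mem_periodicPts_pow (Ideal.Quotient.mk _) hε⟩
  refine ⟨x, eq_of_mem_periodicPts_of_dvd_sub
    (map_mem_periodicPts_pow θ (map_mem_periodicPts_pow _ (hperiodic x))) hε ?_⟩
  rw [← Ideal.mem_span_singleton, ← Ideal.Quotient.eq, hθ]

lemma norm_le_one_of_mem_periodicPts_pow {K : Type*} [NormedDivisionRing K] {p : ℕ} (hp : 1 < p)
    {ε : K} (hε : ε ∈ periodicPts (fun x : K => x ^ p)) : ‖ε‖ ≤ 1 := by
  obtain ⟨m, hm, hεm⟩ := hε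
  by_contra! h
  refine (lt_self_pow₀ h (Nat.one_lt_pow hm.ne' hp)).ne' ?_
  rw [← norm_pow]
  simpa only [pow_iterate] using congrArg norm hεm.eq

theorem exists_wittVector_ringHom_normedField {p : ℕ} [Fact p.Prime] {K : Type u} [NormedField K]
    [IsUltrametricDist K] [CompleteSpace K] (hp₀ : (p : K) ≠ 0) (hp₁ : ‖(p : K)‖ < 1) :
    ∃ (k : Type u) (_ : Field k) (_ : CharP k p) (_ : PerfectRing k p) (θ : WittVector p k →+* K),
      (∀ w, ‖θ w‖ ≤ 1) ∧
      ∀ ε ∈ periodicPts (fun x : K => x ^ p), ∃ x : k, θ (WittVector.teichmuller p x) = ε := by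
  let O := (NormedField.valuation (K := K)).integer
  have hO : (NormedField.valuation (K := K)).Integers O := Valuation.integer.integers _
  have hcast : algebraMap O K (p : O) = p := map_natCast _ p
  have : Fact (¬ IsUnit (p : O)) := ⟨fun h => by
    have := hO.one_of_isUnit h
    rw [hcast, ← NNReal.coe_inj] at this
    exact hp₁.ne this⟩
  have : IsAdicComplete (Ideal.span {(p : O)}) O :=
    (isAdicComplete_iff_completeSpace hO (hcast ▸ hp₀) (hcast ▸ hp₁)).mpr ‹_›
  have hunit (x : O) : IsUnit x ∨ ∃ j : ℕ, (p : O) ∣ x ^ j := by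
    obtain hx | hx := (hO.map_le_one x).eq_or_lt
    · have hx₀ : algebraMap O K x ≠ 0 := fun h => by simp [h] at hx
      exact .inl (hO.isUnit_of_one hx₀.isUnit hx)
    · obtain ⟨j, hj⟩ := exists_pow_lt_of_lt_one (norm_pos_iff.mpr hp₀)
        (show ‖algebraMap O K x‖ < 1 from hx)
      refine .inr ⟨j, hO.dvd_of_le ?_⟩
      rw [map_pow, map_pow, hcast]
      exact hj.le
  obtain ⟨k, hk, hkp, hperf, θ, hθ⟩ := exists_wittVector_ringHom_teichmuller_eq hunit
  refine ⟨k, hk, hkp, hperf, (algebraMap O K).comp θ, fun w => hO.map_le_one (θ w), ?_⟩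
  intro ε hε
  have hε₁ : NormedField.valuation ε ≤ 1 :=
    norm_le_one_of_mem_periodicPts_pow (Fact.out : p.Prime).one_lt hε
  have hεO : (⟨ε, hε₁⟩ : O) ∈ periodicPts (fun x : O => x ^ p) := by
    obtain ⟨m, hm, hεm⟩ := hε
    exact ⟨m, hm, Subtype.ext (by simpa only [pow_iterate, Subring.coe_pow] using hεm.eq)⟩
  obtain ⟨x, hx⟩ := hθ _ hεO
  exact ⟨x, congrArg (algebraMap O K) hx⟩

end Embedding

/-! ### Linear forms in Teichmüller representatives -/

section Cyclotomic

open Polynomial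

lemma irreducible_cyclotomic_prime_pow_of_prime {R : Type*} [CommRing R] [IsDomain R] {p : ℕ}
    (hp : p.Prime) (hpR : Prime (p : R)) (m : ℕ) : Irreducible (cyclotomic (p ^ (m + 1)) R) := by
  have : Fact p.Prime := ⟨hp⟩
  let f := (cyclotomic (p ^ (m + 1)) R).comp (X + C 1)
  have hmonic : f.Monic := (cyclotomic.monic _ R).comp_X_add_C 1
  have hmap : ((cyclotomic (p ^ (m + 1)) ℤ).comp (X + 1)).map (Int.castRingHom R) = f := by
    simp [f, Polynomial.map_comp]
  have hweak : f.IsWeaklyEisensteinAt (Ideal.span {(p : R)}) := by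
    have h := (cyclotomic_prime_pow_comp_X_add_one_isEisensteinAt p m).isWeaklyEisensteinAt.map
      (Int.castRingHom R)
    rwa [hmap, Ideal.map_span, Set.image_singleton, map_natCast] at h
  have hprime : (Ideal.span {(p : R)}).IsPrime := (Ideal.span_singleton_prime hpR.ne_zero).mpr hpR
  have hcoeff : f.coeff 0 = p := by
    simp [f, coeff_zero_eq_eval_zero, eval_comp, eval_one_cyclotomic_prime_pow]
  have heisenstein : f.IsEisensteinAt (Ideal.span {(p : R)}) := by
    refine hmonic.isEisensteinAt_of_mem_of_notMem hprime.ne_top (fun hn => hweak.mem hn) ?_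
    rw [hcoeff, Ideal.span_singleton_pow, Ideal.mem_span_singleton]
    simpa using (pow_dvd_pow_iff hpR.ne_zero hpR.not_isUnit (n := 2) (m := 1)).not.mpr (by norm_num)
  have hdeg : 0 < f.natDegree := by
    rw [natDegree_comp, natDegree_X_add_C, mul_one, natDegree_cyclotomic]
    exact Nat.totient_pos.mpr (pow_pos hp.pos _)
  refine (MulEquiv.irreducible_iff (algEquivAevalXAddC (1 : R))).mp ?_
  exact heisenstein.irreducible hprime hmonic.isPrimitive hdeg

end Cyclotomic

section NoetherianGap

open MvPolynomial WittVector NormedField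

lemma exists_forall_lt_eval_eq_zero_imp {R ι : Type*} [CommRing R] [IsNoetherianRing R] [Finite ι]
    (P : ℕ → MvPolynomial ι R) :
    ∃ M, ∀ x, (∀ m < M, eval x (P m) = 0) → ∀ m, eval x (P m) = 0 := by
  let I : ℕ →o Ideal (MvPolynomial ι R) :=
    ⟨fun M => Ideal.span (P '' {m | m < M}),
      fun _ _ h => Ideal.span_mono (Set.image_mono fun _ hm => lt_of_lt_of_le hm h)⟩
  obtain ⟨M, hM⟩ := monotone_stabilizes_iff_noetherian.mpr
    (inferInstanceAs (IsNoetherianRing (MvPolynomial ι R))) I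
  refine ⟨M, fun x hx m => ?_⟩
  have hle : I M ≤ RingHom.ker (eval x) := by
    refine Ideal.span_le.mpr ?_
    rintro _ ⟨j, hj, rfl⟩
    exact hx j hj
  have hm : P m ∈ I (max M (m + 1)) := Ideal.subset_span ⟨m, by simp, rfl⟩
  rw [← hM _ (le_max_left _ _)] at hm
  exact hle hm

variable {p : ℕ} [Fact p.Prime] {ι : Type*} [Fintype ι]

lemma exists_coeff_dotProduct_teichmuller_eq_eval {k : Type*} [CommRing k]
    (c : ι → WittVector p k) :
    ∃ P : ℕ → MvPolynomial ι k, ∀ (x : ι → k) (m : ℕ),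
      (c ⬝ᵥ (teichmuller p ∘ x)).coeff m = eval x (P m) := by
  let W := (WittVector.map C ∘ c) ⬝ᵥ (teichmuller p ∘ (X : ι → MvPolynomial ι k))
  refine ⟨W.coeff, fun x m => ?_⟩
  have hC (w : WittVector p k) : WittVector.map (eval x) (WittVector.map C w) = w := by
    ext j
    simp only [map_coeff, eval_C]
  rw [← map_coeff]
  simp [W, dotProduct, hC, map_teichmuller]

variable {k L : Type*} [Field k] [CharP k p] [PerfectRing k p] [NormedField L]
  [IsUltrametricDist L] [Algebra (WittVector p k) L]

theorem zeroGapOn_dotProduct_teichmuller (hO : (valuation (K := L)).Integers (WittVector p k))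
    (c : ι → L) :
    ZeroGapOn (fun x : ι → k => c ⬝ᵥ fun i => algebraMap _ L (teichmuller p (x i))) Set.univ := by
  have := hO.isFractionRing
  obtain ⟨⟨b, hb⟩, hbc⟩ :=
    IsLocalization.exist_integer_multiples_of_finite (nonZeroDivisors (WittVector p k)) c
  choose c' hc' using hbc
  obtain ⟨P, hP⟩ := exists_coeff_dotProduct_teichmuller_eq_eval c'
  obtain ⟨M, hM⟩ := exists_forall_lt_eval_eq_zero_imp P
  have hp₀ : algebraMap _ L (p : WittVector p k) ≠ 0 :=
    (map_ne_zero_iff _ hO.hom_inj).mpr (irreducible p).ne_zero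
  refine ⟨_, pow_pos (norm_pos_iff.mpr hp₀) M, fun x _ hne => ?_⟩
  set y : L := c ⬝ᵥ fun i => algebraMap _ L (teichmuller p (x i))
  set w := c' ⬝ᵥ (teichmuller p ∘ x)
  have hw : algebraMap _ L w = algebraMap _ L b * y := by
    simp [w, y, dotProduct, hc', Algebra.smul_def, Finset.mul_sum, mul_assoc]
  have hw₀ : w ≠ 0 := by
    intro h
    rw [h, map_zero, zero_eq_mul] at hw
    exact hw.elim ((map_ne_zero_iff _ hO.hom_inj).mpr (nonZeroDivisors.ne_zero hb)) hne
  have hwM : w ∉ Ideal.span {(p : WittVector p k)} ^ M := by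
    rw [Ideal.span_singleton_pow, mem_span_p_pow_iff_le_coeff_eq_zero]
    refine fun h => hw₀ (WittVector.ext fun m => ?_)
    rw [hP, zero_coeff]
    exact hM x (fun j hj => hP x j ▸ h j hj) m
  rw [mem_span_singleton_pow_iff_norm_le hO, not_le] at hwM
  calc _ ≤ ‖algebraMap _ L w‖ := hwM.le
    _ = ‖algebraMap _ L b‖ * ‖y‖ := by rw [hw, norm_mul]
    _ ≤ ‖y‖ := mul_le_of_le_one_left (norm_nonneg y) (hO.map_le_one b)

end NoetherianGap

/-! ### The Tate–Voloch theorem for linear forms -/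

section TateVoloch

open Function Set

variable {ι K : Type*} [Fintype ι] [NormedField K]

lemma ZeroGapOn.dotProduct_of_isClosed_subfield [CompleteSpace K] {C : Subfield K}
    (hC : IsClosed (C : Set K)) (hnontriv : ∃ x ∈ C, 1 < ‖x‖) {s : Set (ι → K)}
    (hs : ∀ x ∈ s, ∀ i, x i ∈ C)
    (h : ∀ c : ι → K, (∀ i, c i ∈ C) → ZeroGapOn (fun x => c ⬝ᵥ x) s) (a : ι → K) :
    ZeroGapOn (fun x => a ⬝ᵥ x) s := by
  let _ : NontriviallyNormedField C :=
    { (inferInstance : NormedField C) with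
      non_trivial := by
        obtain ⟨x, hxC, hx⟩ := hnontriv
        exact ⟨⟨x, hxC⟩, hx⟩ }
  let _ : NormedAlgebra C K :=
    { (inferInstance : Algebra C K) with norm_smul_le := fun r x => (norm_mul (r : K) x).le }
  have : CompleteSpace C := hC.completeSpace_coe
  let t : Set (ι → C) := {y | (fun i => (y i : K)) ∈ s}
  have hgap (c : ι → C) : ZeroGapOn (fun y => c ⬝ᵥ y) t := by
    refine (h (fun i => c i) fun i => (c i).2).of_forall_exists_norm_eq fun y hy => ⟨_, hy, ?_⟩
    exact congrArg norm (map_sum C.subtype _ _)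
  refine (dotProduct_of_complete_subfield hgap a).of_forall_exists_norm_eq fun x hx => ?_
  exact ⟨fun i => ⟨x i, hs x hx i⟩, hx, rfl⟩

theorem zeroGapOn_dotProduct_isOfFinOrder_of_irreducible_cyclotomic [IsUltrametricDist K]
    [CompleteSpace K] {L : Type*} [NontriviallyNormedField L] [CompleteSpace L]
    [IsUltrametricDist L] [NormedAlgebra L K] {p : ℕ} (hp : p.Prime) (hpL : (p : L) ≠ 0)
    (hcyc : ∀ m, Irreducible (Polynomial.cyclotomic (p ^ (m + 1)) L)) {E : Set L}
    (hE : ∀ c : ι → L, ZeroGapOn (fun ε => c ⬝ᵥ ε) {ε | ∀ i, ε i ∈ E})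
    (hEK : periodicPts (fun x : K => x ^ p) ⊆ algebraMap L K '' E) (a : ι → K) :
    ZeroGapOn (fun z => a ⬝ᵥ z) {z | ∀ i, IsOfFinOrder (z i)} := by
  set T := periodicPts fun x : K => x ^ p
  let A := IntermediateField.adjoin L (primePowerRoots K p)
  let C := A.toSubfield.topologicalClosure
  have hA : (A : Set K) = Algebra.adjoin L (primePowerRoots K p) := by
    rw [← IntermediateField.coe_toSubalgebra,
      IntermediateField.adjoin_toSubalgebra_of_isAlgebraic]
    rintro η ⟨m, hη⟩
    exact (IsIntegral.of_pow (pow_pos hp.pos m) (hη ▸ isIntegral_one)).isAlgebraic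
  have hT (a : ι → K) : ZeroGapOn (fun ε => a ⬝ᵥ ε) {ε | ∀ i, ε i ∈ T} := by
    refine (ZeroGapOn.dotProduct_of_complete_subfield hE a).of_forall_exists_norm_eq
      fun ε hε => ?_
    choose x hxE hx using fun i => hEK (hε i)
    exact ⟨x, hxE, by rw [← funext hx]; rfl⟩
  have hdecomp {z : ι → K} (hz : ∀ i, IsOfFinOrder (z i)) :
      ∃ ε η : ι → K, (∀ i, ε i ∈ T) ∧ (∀ i, η i ∈ primePowerRoots K p) ∧ z = ε * η := by
    choose ε hε η hη h using fun i => exists_periodicPts_mul_primePowerRoots_eq hp.ne_zero (hz i)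
    exact ⟨ε, η, hε, hη, (funext h).symm⟩
  refine .dotProduct_of_isClosed_subfield (C := C) A.toSubfield.isClosed_topologicalClosure ?_
    (fun z hz i => ?_) (fun c hc => ?_) a
  · obtain ⟨x, hx⟩ := NormedField.exists_one_lt_norm L
    exact ⟨algebraMap L K x, A.toSubfield.le_topologicalClosure (A.algebraMap_mem x),
      by rwa [norm_algebraMap']⟩
  · obtain ⟨ε, η, hε, hη, rfl⟩ := hdecomp hz
    obtain ⟨x, -, hx⟩ := hEK (hε i)
    exact A.toSubfield.le_topologicalClosure (mul_mem (hx ▸ A.algebraMap_mem x)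
      (IntermediateField.subset_adjoin L _ (hη i)))
  · have hgap := zeroGapOn_sum_of_mem_closure_adjoin hp hpL hcyc
      (hEK.trans (image_subset_range _ _))
      (fun ε => norm_le_one_of_mem_periodicPts_pow hp.one_lt) hT
      (fun i => show c i ∈ closure _ from hA ▸ hc i) Finset.univ
    refine hgap.of_forall_exists_norm_eq fun z hz => ?_
    obtain ⟨ε, η, hε, hη, rfl⟩ := hdecomp hz
    exact ⟨(ε, η), ⟨hε, hη⟩, by simp [dotProduct, mul_assoc]⟩

end TateVoloch

section WittInstance

open Function NormedField WittVector

variable {p : ℕ} [Fact p.Prime] {k K : Type*} [Field k] [CharP k p] [PerfectRing k p]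
  [NormedField K] {θ : WittVector p k →+* K}

lemma injective_of_wittVector_ringHom {R : Type*} [CommRing R] [IsDomain R]
    {θ : WittVector p k →+* R} (hp₀ : (p : R) ≠ 0) : Injective θ := by
  refine (injective_iff_map_eq_zero θ).mpr fun w hw => ?_
  by_contra hne
  obtain ⟨n, u, rfl⟩ := exists_eq_pow_p_mul' w hne
  rw [map_mul, map_pow, map_natCast] at hw
  exact mul_ne_zero (pow_ne_zero n hp₀) (u.isUnit.map θ).ne_zero hw

lemma isUnit_of_norm_wittVector_ringHom_eq_one (hθ : ∀ w, ‖θ w‖ ≤ 1) (hp₁ : ‖(p : K)‖ < 1)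
    {w : WittVector p k} (hw : ‖θ w‖ = 1) : IsUnit w := by
  have hw₀ : w ≠ 0 := by
    rintro rfl
    simp at hw
  obtain ⟨_ | n, u, rfl⟩ := exists_eq_pow_p_mul' w hw₀
  · simp
  · refine absurd hw (ne_of_lt ?_)
    rw [map_mul, map_pow, map_natCast, norm_mul, norm_pow]
    exact mul_lt_one_of_nonneg_of_lt_one_left (by positivity)
      (pow_lt_one₀ (norm_nonneg _) hp₁ n.succ_ne_zero) (hθ _)

theorem zeroGapOn_dotProduct_isOfFinOrder_of_completeSpace [IsUltrametricDist K]
    [CompleteSpace K] (hp₀ : (p : K) ≠ 0) (hp₁ : ‖(p : K)‖ < 1) {ι : Type*} [Fintype ι]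
    (a : ι → K) : ZeroGapOn (fun z => a ⬝ᵥ z) {z | ∀ i, IsOfFinOrder (z i)} := by
  obtain ⟨k, _, _, _, θ, hθ, hT⟩ := exists_wittVector_ringHom_normedField hp₀ hp₁
  let W := WittVector p k
  let L := FractionRing W
  let φ : L →+* K := IsFractionRing.lift (injective_of_wittVector_ringHom (θ := θ) hp₀)
  have hφ (w : W) : φ (algebraMap W L w) = θ w := IsFractionRing.lift_algebraMap _ w
  let _ : NormedField L := NormedField.induced L K φ φ.injective
  have hnorm (x : L) : ‖φ x‖ = ‖x‖ := rfl
  have hcast : algebraMap W L (p : W) = p := map_natCast _ p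
  have hpL₀ : (p : L) ≠ 0 := fun h => hp₀ (by rw [← map_natCast φ, h, map_zero])
  have hpL₁ : ‖(p : L)‖ < 1 := by rwa [← hnorm, map_natCast]
  let _ : NontriviallyNormedField L := .ofNormNeOne ⟨p, hpL₀, hpL₁.ne⟩
  let _ : NormedAlgebra L K :=
    { φ.toAlgebra with norm_smul_le := fun x y => (norm_mul (φ x) y).le }
  have : IsUltrametricDist L := .of_normedAlgebra' K
  have hO : (valuation (K := L)).Integers W :=
    integers_of_valuationRing (fun w => by rw [← hnorm, hφ]; exact hθ w) fun w hw =>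
      isUnit_of_norm_wittVector_ringHom_eq_one hθ hp₁ (by rwa [← hφ, hnorm])
  have : CompleteSpace L :=
    (isAdicComplete_iff_completeSpace (ϖ := (p : W)) hO (hcast ▸ hpL₀) (hcast ▸ hpL₁)).mp
      inferInstance
  refine zeroGapOn_dotProduct_isOfFinOrder_of_irreducible_cyclotomic (L := L) (p := p) Fact.out
    hpL₀ (fun m => ?_) (E := Set.range fun x => algebraMap W L (teichmuller p x)) (fun c => ?_)
    (fun ε hε => ?_) a
  · have hprime : Prime (p : W) := (irreducible (k := k) p).prime
    have h := irreducible_cyclotomic_prime_pow_of_prime Fact.out hprime m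
    rwa [(Polynomial.cyclotomic.monic _ W).irreducible_iff_irreducible_map_fraction_map (K := L),
      Polynomial.map_cyclotomic] at h
  · refine (zeroGapOn_dotProduct_teichmuller hO c).of_forall_exists_norm_eq fun ε hε => ?_
    choose x hx using hε
    exact ⟨x, trivial, by rw [← funext hx]⟩
  · obtain ⟨x, hx⟩ := hT ε hε
    exact ⟨_, ⟨x, rfl⟩, (hφ _).trans hx⟩

end WittInstance

section Completion

open UniformSpace

theorem zeroGapOn_dotProduct_isOfFinOrder {p : ℕ} (hp : p.Prime) {K : Type*} [NormedField K]
    [IsUltrametricDist K] (hp₀ : (p : K) ≠ 0) (hp₁ : ‖(p : K)‖ < 1) {ι : Type*} [Fintype ι]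
    (a : ι → K) : ZeroGapOn (fun z => a ⬝ᵥ z) {z | ∀ i, IsOfFinOrder (z i)} := by
  have : Fact p.Prime := ⟨hp⟩
  let φ : K →+* Completion K := Completion.coeRingHom
  have hφ (x : K) : ‖φ x‖ = ‖x‖ := Completion.norm_coe x
  have : IsUltrametricDist (Completion K) := .of_normedAlgebra K
  have hpK : (p : Completion K) = φ p := (map_natCast φ p).symm
  have h := zeroGapOn_dotProduct_isOfFinOrder_of_completeSpace (p := p)
    (hpK ▸ (map_ne_zero φ).mpr hp₀) (by rwa [hpK, hφ]) (φ ∘ a)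
  refine h.of_forall_exists_norm_eq fun z hz => ⟨φ ∘ z, fun i => ?_, ?_⟩
  · exact φ.toMonoidHom.isOfFinOrder (hz i)
  · rw [← hφ, RingHom.map_dotProduct]

end Completion

/-! ### Polynomials at torsion points -/

section Torsion

open MvPolynomial

variable {K : Type*} [NontriviallyNormedField K] {n : ℕ} {F : MvPolynomial (Fin n) K}

lemma isOfFinOrder_prod_pow {M ι : Type*} [CommMonoid M] (s : Finset ι) {ζ : ι → M}
    (hζ : ∀ i, IsOfFinOrder (ζ i)) (d : ι → ℕ) : IsOfFinOrder (∏ i ∈ s, ζ i ^ d i) :=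
  Submonoid.prod_mem (CommMonoid.torsion M) fun i _ => (hζ i).pow

lemma zeroGapOn_eval_isOfFinOrder {ι K : Type*} [Finite ι] [NormedField K] (F : MvPolynomial ι K)
    (h : ∀ a : F.support → K, ZeroGapOn (fun z => a ⬝ᵥ z) {z | ∀ i, IsOfFinOrder (z i)}) :
    ZeroGapOn (fun ζ => eval ζ F) {ζ : ι → K | ∀ i, IsOfFinOrder (ζ i)} := by
  have := Fintype.ofFinite ι
  refine (h fun d => F.coeff d).of_forall_exists_norm_eq fun ζ hζ =>
    ⟨fun d => ∏ i, ζ i ^ (d : ι →₀ ℕ) i, fun d => isOfFinOrder_prod_pow _ hζ _, ?_⟩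
  rw [eval_eq', ← Finset.sum_coe_sort, dotProduct]

lemma norm_eval_le_mvGaussNorm [IsUltrametricDist K] {ζ : Fin n → K}
    (hζ : ∀ i, IsOfFinOrder (ζ i)) : ‖eval ζ F‖ ≤ mvGaussNorm F := by
  rw [eval_eq']
  refine IsUltrametricDist.norm_sum_le_of_forall_le_of_nonneg (NNReal.coe_nonneg _) fun d hd => ?_
  rw [norm_mul, (isOfFinOrder_prod_pow _ hζ d).norm_eq_one, mul_one]
  exact_mod_cast Finset.le_sup (f := fun d => ‖F.coeff d‖₊) hd

lemma exists_isOfFinOrder_eval_ne_zero {R σ : Type*} [CommRing R] [IsDomain R]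
    (hμ : {x : R | IsOfFinOrder x}.Infinite) {F : MvPolynomial σ R} (hF : F ≠ 0) :
    ∃ ζ : σ → R, (∀ i, IsOfFinOrder (ζ i)) ∧ eval ζ F ≠ 0 := by
  contrapose! hF
  refine MvPolynomial.funext_set (fun _ => {x | IsOfFinOrder x}) (fun _ => hμ) fun ζ hζ => ?_
  rw [map_zero]
  exact hF ζ fun i => hζ i trivial

lemma infinite_isOfFinOrder_of_isAlgClosed {K : Type*} [Field K] [IsAlgClosed K] {p : ℕ}
    (hp : 2 ≤ p) (hpK : (p : K) ≠ 0) : {x : K | IsOfFinOrder x}.Infinite := by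
  have hprim (m : ℕ) : ∃ η : K, IsPrimitiveRoot η (p ^ m) := by
    have : NeZero ((p ^ m : ℕ) : K) := ⟨by rw [Nat.cast_pow]; exact pow_ne_zero m hpK⟩
    exact HasEnoughRootsOfUnity.exists_primitiveRoot K (p ^ m)
  choose η hη using hprim
  refine Set.infinite_of_injective_forall_mem (f := η) (fun a b hab => ?_) fun m =>
    (hη m).isOfFinOrder (pow_ne_zero m (by omega))
  exact Nat.pow_right_injective hp ((hη a).unique (hab ▸ hη b))

lemma infMv_eq_sInf_image (F : MvPolynomial (Fin n) K) :
    infMv F = sInf ((fun ζ => ‖eval ζ F‖) ''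
      {ζ | (∀ i, IsOfFinOrder (ζ i)) ∧ eval ζ F ≠ 0}) := by
  unfold infMv
  congr 1
  ext r
  constructor
  · rintro ⟨ζ, hζ, hne, rfl⟩
    exact ⟨_, ⟨fun i => (Units.coeHom K).isOfFinOrder (hζ i), hne⟩, rfl⟩
  · rintro ⟨ζ, ⟨hζ, hne⟩, rfl⟩
    lift ζ to Fin n → Kˣ using fun i => (hζ i).isUnit
    exact ⟨ζ, fun i => Units.isOfFinOrder_val.mp (hζ i), hne, rfl⟩

lemma infMv_pos (hF : ZeroGapOn (fun ζ => eval ζ F) {ζ | ∀ i, IsOfFinOrder (ζ i)})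
    (hne : ∃ ζ : Fin n → K, (∀ i, IsOfFinOrder (ζ i)) ∧ eval ζ F ≠ 0) : 0 < infMv F := by
  obtain ⟨δ, hδ, h⟩ := hF
  rw [infMv_eq_sInf_image]
  refine hδ.trans_le (le_csInf (Set.Nonempty.image _ hne) ?_)
  rintro _ ⟨ζ, ⟨hζ, hne⟩, rfl⟩
  exact h ζ hζ hne

lemma infMv_le_mvGaussNorm [IsUltrametricDist K]
    (hne : ∃ ζ : Fin n → K, (∀ i, IsOfFinOrder (ζ i)) ∧ eval ζ F ≠ 0) :
    infMv F ≤ mvGaussNorm F := by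
  obtain ⟨ζ, hζ, hne⟩ := hne
  rw [infMv_eq_sInf_image]
  have hbdd : BddBelow ((fun ζ => ‖eval ζ F‖) ''
      {ζ | (∀ i, IsOfFinOrder (ζ i)) ∧ eval ζ F ≠ 0}) :=
    ⟨0, Set.forall_mem_image.mpr fun _ _ => norm_nonneg _⟩
  exact (csInf_le hbdd ⟨ζ, ⟨hζ, hne⟩, rfl⟩).trans (norm_eval_le_mvGaussNorm hζ)

end Torsion

theorem stmt11_general {p : ℕ} (hp : p.Prime)
    {K : Type*} [NontriviallyNormedField K] [IsUltrametricDist K]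
    (hp₀ : (p : K) ≠ 0) (hp₁ : ‖(p : K)‖ < 1) (hμ : {x : K | IsOfFinOrder x}.Infinite)
    {n : ℕ} (F : MvPolynomial (Fin n) K) (hF : F ≠ 0) :
    0 < infMv F ∧ 0 ≤ -Real.log (infMv F / mvGaussNorm F) := by
  have hne := exists_isOfFinOrder_eval_ne_zero hμ hF
  have hpos : 0 < infMv F :=
    infMv_pos (zeroGapOn_eval_isOfFinOrder F (zeroGapOn_dotProduct_isOfFinOrder hp hp₀ hp₁)) hne
  have hle : infMv F ≤ mvGaussNorm F := infMv_le_mvGaussNorm hne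
  refine ⟨hpos, neg_nonneg.mpr (Real.log_nonpos ?_ ?_)⟩
  · exact div_nonneg hpos.le (hpos.le.trans hle)
  · exact div_le_one_of_le₀ hle (hpos.le.trans hle)

/-- For a nonzero `F ∈ ℂ_p[X₁,…,X_n]`, `inf(F)` is strictly positive and
`c(F) = -log(inf(F)/|F|_p) ≥ 0`. -/
theorem stmt11 {p : ℕ} (hp : p.Prime)
    {K : Type*} [NontriviallyNormedField K] [IsUltrametricDist K] [IsAlgClosed K]
    [CompleteSpace K] (hpnorm : ‖(p : K)‖ = (p : ℝ)⁻¹)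
    {n : ℕ} (F : MvPolynomial (Fin n) K) (hF : F ≠ 0) :
    0 < infMv F ∧ 0 ≤ -Real.log (infMv F / mvGaussNorm F) := by
  have hp₁ : ‖(p : K)‖ < 1 := hpnorm ▸ inv_lt_one_of_one_lt₀ (Nat.one_lt_cast.mpr hp.one_lt)
  have hp₀ : (p : K) ≠ 0 := norm_pos_iff.mp (hpnorm ▸ inv_pos.mpr (Nat.cast_pos.mpr hp.pos))
  exact stmt11_general hp hp₀ hp₁ (infinite_isOfFinOrder_of_isAlgClosed hp.two_le hp₀) F hF
end

section
/- Let p be a prime, F₁,…,F_m ∈ ℂ_p[X₁,…,X_n] polynomials, u₁,…,u_m ∈ ℤ^r pairwise distinct, η ∈ (μ_∞)^n a torsion point, and G < Gal(ℚ(η)/ℚ) such that for every τ ∈ G there is an index i with F_i(τ(η)) ≠ 0. Then there exists a torsion point ζ ∈ (μ_∞)^r such that F = ζ^{u₁}F₁ + ⋯ + ζ^{u_m}F_m satisfies F(τ(η)) ≠ 0 for all τ ∈ G and |F|_p = max{|F_i|_p : 1 ≤ i ≤ m}. -/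
/-!
Choose `v ∈ ℤ^r` with the integers `⟨uᵢ, v⟩` pairwise distinct and set `ζⱼ = ω ^ vⱼ` for a root of
unity `ω`. For scalars `cᵢ`, the sum `∑ ζ ^ uᵢ * cᵢ` is then, up to a power of `ω`, the value at `ω`
of a univariate polynomial with coefficients `cᵢ`, whose Gauss norm is `max ‖cᵢ‖`. Each value of `F`
at a point, and each coefficient of `F`, is such a sum, so it suffices that finitely many univariate
polynomials attain their Gauss norms at a common root of unity. As the Gauss norm is multiplicative
and bounds the values at roots of unity, this reduces to the product of the nonzero ones, that is,
to a single polynomial `P`. For `M > deg P` with `‖M‖ = 1`, Fourier inversion recovers each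
coefficient of `P` from its values at the `M`-th roots of unity by dividing by `M`, so one of these
values is at least as large as the Gauss norm.
-/

open Polynomial
open scoped NNReal

section RootsOfUnity

theorem exists_lt_norm_natCast_eq_one (R : Type*) [NormedRing R] [NormMulClass R] [NormOneClass R]
    [IsUltrametricDist R] (T : ℕ) : ∃ M : ℕ, T < M ∧ ‖(M : R)‖ = 1 := by
  obtain ⟨q, hq, hnorm⟩ : ∃ q : ℕ, 1 < q ∧ ‖(q : R)‖ = 1 := by
    have hsub : ((3 : ℕ) : R) + -((2 : ℕ) : R) = 1 := by norm_num
    have hmax : (1 : ℝ) ≤ max ‖((3 : ℕ) : R)‖ ‖((2 : ℕ) : R)‖ := by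
      have h := IsUltrametricDist.norm_add_le_max ((3 : ℕ) : R) (-((2 : ℕ) : R))
      rwa [hsub, norm_neg, norm_one] at h
    rcases le_max_iff.1 hmax with h | h
    · exact ⟨3, by norm_num, (IsUltrametricDist.norm_natCast_le_one R 3).antisymm h⟩
    · exact ⟨2, by norm_num, (IsUltrametricDist.norm_natCast_le_one R 2).antisymm h⟩
  exact ⟨q ^ T, Nat.lt_pow_self hq, by rw [Nat.cast_pow, norm_pow, hnorm, one_pow]⟩

variable {K : Type*} [Field K] {M : ℕ} {w : K}

theorem sum_pow_inv_mul_pow_primitiveRoot (hw : IsPrimitiveRoot w M) {k l : ℕ} (hk : k < M)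
    (hl : l < M) :
    ∑ j ∈ Finset.range M, ((w ^ k)⁻¹ * w ^ l) ^ j = if l = k then (M : K) else 0 := by
  have hwk : w ^ k ≠ 0 := pow_ne_zero k (hw.ne_zero (by lia))
  split_ifs with h
  · simp [h, inv_mul_cancel₀ hwk]
  · set z := (w ^ k)⁻¹ * w ^ l
    have hz : z ≠ 1 := fun hz => h (hw.pow_inj hl hk ((inv_mul_eq_one₀ hwk).1 hz).symm)
    have hzM : z ^ M = 1 := by
      simp only [z, mul_pow, inv_pow, ← pow_mul, mul_comm _ M, pow_mul w M, hw.pow_eq_one, one_pow,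
        inv_one, mul_one]
    rw [geom_sum_eq hz, hzM, sub_self, zero_div]

theorem sum_inv_pow_mul_eval_primitiveRoot (hw : IsPrimitiveRoot w M) {P : K[X]}
    (hP : P.natDegree < M) {k : ℕ} (hk : k < M) :
    ∑ j ∈ Finset.range M, ((w ^ k)⁻¹) ^ j * P.eval (w ^ j) = M * P.coeff k := by
  calc ∑ j ∈ Finset.range M, ((w ^ k)⁻¹) ^ j * P.eval (w ^ j)
      = ∑ j ∈ Finset.range M, ∑ l ∈ Finset.range M,
          P.coeff l * ((w ^ k)⁻¹ * w ^ l) ^ j := by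
        refine Finset.sum_congr rfl fun j _ => ?_
        rw [eval_eq_sum_range' hP, Finset.mul_sum]
        exact Finset.sum_congr rfl fun l _ => by ring
    _ = ∑ l ∈ Finset.range M, P.coeff l * if l = k then (M : K) else 0 := by
        rw [Finset.sum_comm]
        refine Finset.sum_congr rfl fun l hl => ?_
        rw [← Finset.mul_sum, sum_pow_inv_mul_pow_primitiveRoot hw hk (Finset.mem_range.1 hl)]
    _ = M * P.coeff k := by
        simp only [mul_ite, mul_zero, Finset.sum_ite_eq', Finset.mem_range, hk, if_true]
        exact mul_comm _ _

end RootsOfUnity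

section GaussNorm

theorem norm_eval_le_supNorm {R : Type*} [SeminormedRing R] [NormOneClass R] [IsUltrametricDist R]
    (P : R[X]) {x : R} (hx : ‖x‖ ≤ 1) : ‖P.eval x‖ ≤ P.supNorm := by
  rw [eval_eq_sum_range]
  refine IsUltrametricDist.norm_sum_le_of_forall_le_of_nonneg P.supNorm_nonneg fun i _ => ?_
  calc ‖P.coeff i * x ^ i‖ ≤ ‖P.coeff i‖ * ‖x‖ ^ i :=
        (norm_mul_le _ _).trans (by gcongr; exact norm_pow_le x i)
    _ ≤ ‖P.coeff i‖ := mul_le_of_le_one_right (norm_nonneg _) (pow_le_one₀ (norm_nonneg _) hx)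
    _ ≤ P.supNorm := P.le_supNorm i

theorem supNorm_sum_monomial {R : Type*} [SeminormedRing R] {ι : Type*} [Fintype ι] {e : ι → ℕ}
    (he : Function.Injective e) (c : ι → R) :
    (∑ i, monomial (e i) (c i)).supNorm = ‖c‖ := by
  classical
  have hcoeff : ∀ k, (∑ i, monomial (e i) (c i)).coeff k = ∑ i, if e i = k then c i else 0 :=
    fun k => by simp only [finsetSum_coeff, coeff_monomial]
  apply le_antisymm
  · obtain ⟨k, hk⟩ := (∑ i, monomial (e i) (c i)).exists_eq_supNorm
    rw [hk, hcoeff]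
    by_cases h : ∃ i, e i = k
    · obtain ⟨i, rfl⟩ := h
      simpa only [he.eq_iff, Finset.sum_ite_eq', Finset.mem_univ, if_true] using norm_le_pi_norm c i
    · rw [Finset.sum_eq_zero fun i _ => if_neg fun hi => h ⟨i, hi⟩, norm_zero]
      exact norm_nonneg c
  · refine (pi_norm_le_iff_of_nonneg (supNorm_nonneg _)).2 fun i => ?_
    simpa only [hcoeff, he.eq_iff, Finset.sum_ite_eq', Finset.mem_univ, if_true] using
      (∑ i, monomial (e i) (c i)).le_supNorm (e i)

variable {K : Type*} [NormedField K] [IsUltrametricDist K]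

theorem supNorm_mul (P Q : K[X]) : (P * Q).supNorm = P.supNorm * Q.supNorm :=
  gaussNorm_mul (v := NormedField.toAbsoluteValue K) IsUltrametricDist.isNonarchimedean_norm
    one_pos P Q

theorem supNorm_prod {α : Type*} (s : Finset α) (P : α → K[X]) :
    (∏ a ∈ s, P a).supNorm = ∏ a ∈ s, (P a).supNorm :=
  map_prod (⟨⟨supNorm, by rw [← C_1, supNorm_C, norm_one]⟩, supNorm_mul⟩ : K[X] →* ℝ) P s

variable [IsSepClosed K]

theorem exists_isOfFinOrder_norm_eval_eq_supNorm (P : K[X]) :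
    ∃ w : Kˣ, IsOfFinOrder w ∧ ‖P.eval (w : K)‖ = P.supNorm := by
  obtain ⟨k, hk⟩ := P.exists_eq_supNorm
  obtain ⟨M, hM, hMnorm⟩ := exists_lt_norm_natCast_eq_one K (max P.natDegree k)
  obtain ⟨hPM, hkM⟩ := max_lt_iff.1 hM
  have : NeZero (M : K) := ⟨norm_ne_zero_iff.1 (hMnorm ▸ one_ne_zero)⟩
  have : NeZero M := .of_neZero_natCast K
  obtain ⟨w, hw⟩ := HasEnoughRootsOfUnity.exists_primitiveRoot K M
  obtain ⟨w, rfl⟩ := hw.isUnit (NeZero.ne M)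
  have hwfin : IsOfFinOrder (w : K) := hw.isOfFinOrder (NeZero.ne M)
  obtain ⟨j, -, hj⟩ := IsUltrametricDist.exists_norm_finsetSum_le_of_nonempty
    (Finset.nonempty_range_iff.2 (NeZero.ne M)) fun j => ((w : K) ^ k)⁻¹ ^ j * P.eval ((w : K) ^ j)
  rw [sum_inv_pow_mul_eval_primitiveRoot hw hPM hkM, norm_mul, hMnorm, one_mul, ← hk, norm_mul,
    norm_pow, norm_inv, norm_pow, hwfin.norm_eq_one, one_pow, inv_one, one_pow, one_mul] at hj
  refine ⟨w ^ j, (Units.isOfFinOrder_val.1 hwfin).pow, ?_⟩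
  rw [Units.val_pow_eq_pow_val]
  exact (norm_eval_le_supNorm P hwfin.pow.norm_eq_one.le).antisymm hj

theorem exists_isOfFinOrder_forall_norm_eval_eq_supNorm {A : Set K[X]} (hA : A.Finite) :
    ∃ w : Kˣ, IsOfFinOrder w ∧ ∀ P ∈ A, ‖P.eval (w : K)‖ = P.supNorm := by
  classical
  lift A to Finset K[X] using hA
  obtain ⟨w, hw, hprod⟩ := exists_isOfFinOrder_norm_eval_eq_supNorm (∏ P ∈ A.erase 0, P)
  rw [eval_prod, norm_prod, supNorm_prod] at hprod
  have hle : ∀ P : K[X], ‖P.eval (w : K)‖ ≤ P.supNorm := fun P =>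
    norm_eval_le_supNorm P (Units.isOfFinOrder_val.2 hw).norm_eq_one.le
  have hprod_ne : ∏ P ∈ A.erase 0, P.supNorm ≠ 0 := Finset.prod_ne_zero_iff.2 fun P hP =>
    (supNorm_eq_zero_iff P).not.2 (Finset.ne_of_mem_erase hP)
  have hpos : ∀ P ∈ A.erase 0, 0 < ‖P.eval (w : K)‖ := fun P hP =>
    (norm_nonneg _).lt_of_ne' (Finset.prod_ne_zero_iff.1 (hprod ▸ hprod_ne) P hP)
  refine ⟨w, hw, fun P hP => (hle P).eq_of_not_lt fun hlt => ?_⟩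
  have hP0 : P ≠ 0 := by
    rintro rfl
    simp only [eval_zero, norm_zero, supNorm_zero, lt_irrefl] at hlt
  exact (Finset.prod_lt_prod hpos (fun Q _ => hle Q) ⟨P, Finset.mem_erase.2 ⟨hP0, hP⟩, hlt⟩).ne
    hprod

end GaussNorm

section Exponents

theorem exists_forall_dotProduct_ne_zero {R α κ : Type*} [CommRing R] [IsDomain R] [Infinite R]
    [Finite α] [Fintype κ] {a : α → κ → R} (ha : ∀ s, a s ≠ 0) :
    ∃ v : κ → R, ∀ s, a s ⬝ᵥ v ≠ 0 := by
  have := Fintype.ofFinite α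
  let L : α → MvPolynomial κ R := fun s => ∑ j, MvPolynomial.C (a s j) * MvPolynomial.X j
  have hLeval : ∀ s v, MvPolynomial.eval v (L s) = a s ⬝ᵥ v := fun s v => by
    simp only [L, map_sum, map_mul, MvPolynomial.eval_C, MvPolynomial.eval_X, dotProduct]
  have hL : ∀ s, L s ≠ 0 := fun s h => ha s <| dotProduct_eq_zero _ fun v => by
    rw [← hLeval, h, map_zero]
  by_contra! hv
  suffices ∏ s, L s = 0 from Finset.prod_ne_zero_iff.2 (fun s _ => hL s) this
  refine MvPolynomial.funext fun v => ?_
  obtain ⟨s, hs⟩ := hv v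
  rw [map_prod, map_zero]
  exact Finset.prod_eq_zero (Finset.mem_univ s) ((hLeval s v).trans hs)

theorem exists_injective_dotProduct {R ι κ : Type*} [CommRing R] [IsDomain R] [Infinite R]
    [Finite ι] [Fintype κ] {u : ι → κ → R} (hu : Function.Injective u) :
    ∃ v : κ → R, Function.Injective fun i => u i ⬝ᵥ v := by
  obtain ⟨v, hv⟩ := exists_forall_dotProduct_ne_zero
    (a := fun s : {s : ι × ι // s.1 ≠ s.2} => u s.1.1 - u s.1.2)
    fun s => sub_ne_zero.2 (hu.ne s.2)
  refine ⟨v, fun i i' h => by_contra fun hne => hv ⟨(i, i'), hne⟩ ?_⟩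
  rw [sub_dotProduct]
  exact sub_eq_zero.2 h

theorem prod_zpow_zpow {H κ : Type*} [CommGroup H] [Fintype κ] (g : H) (a v : κ → ℤ) :
    ∏ j, (g ^ v j) ^ a j = g ^ (a ⬝ᵥ v) := by
  simp only [← zpow_mul, mul_comm (v _)]
  exact (map_sum (zmultiplesHom (Additive H) (Additive.ofMul g)) (fun j => a j * v j)
    Finset.univ).symm

variable {K : Type*} [NormedField K] [IsUltrametricDist K] [IsSepClosed K] {ι κ : Type*}
  [Fintype ι] [Fintype κ]

theorem exists_isOfFinOrder_forall_norm_sum_zpow_eq {f : ι → ℤ} (hf : Function.Injective f)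
    {A : Set (ι → K)} (hA : A.Finite) :
    ∃ w : Kˣ, IsOfFinOrder w ∧ ∀ c ∈ A, ‖∑ i, ((w ^ f i : Kˣ) : K) * c i‖ = ‖c‖ := by
  obtain ⟨T, hT⟩ := (Set.finite_range f).bddBelow
  choose e he using fun i => Int.eq_ofNat_of_zero_le (sub_nonneg.2 (hT (Set.mem_range_self i)))
  have he_inj : Function.Injective e := fun i i' h => hf (by have := he i; have := he i'; lia)
  obtain ⟨w, hw, hwA⟩ := exists_isOfFinOrder_forall_norm_eval_eq_supNorm
    (hA.image fun c => ∑ i, monomial (e i) (c i))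
  refine ⟨w, hw, fun c hc => ?_⟩
  have hsum : ∑ i, ((w ^ f i : Kˣ) : K) * c i
      = ((w ^ T : Kˣ) : K) * (∑ i, monomial (e i) (c i)).eval (w : K) := by
    rw [eval_finsetSum, Finset.mul_sum]
    refine Finset.sum_congr rfl fun i _ => ?_
    rw [eval_monomial, sub_eq_iff_eq_add.1 (he i), zpow_add, zpow_natCast, Units.val_mul,
      Units.val_pow_eq_pow_val]
    ring
  rw [hsum, norm_mul, (Units.isOfFinOrder_val.2 hw.zpow).norm_eq_one, one_mul,
    hwA _ (Set.mem_image_of_mem _ hc), supNorm_sum_monomial he_inj]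

theorem exists_isOfFinOrder_forall_norm_sum_prod_zpow_eq {u : ι → κ → ℤ}
    (hu : Function.Injective u) {A : Set (ι → K)} (hA : A.Finite) :
    ∃ ζ : κ → Kˣ, (∀ j, IsOfFinOrder (ζ j)) ∧
      ∀ c ∈ A, ‖∑ i, ((∏ j, ζ j ^ u i j : Kˣ) : K) * c i‖ = ‖c‖ := by
  obtain ⟨v, hv⟩ := exists_injective_dotProduct hu
  obtain ⟨w, hw, hwA⟩ := exists_isOfFinOrder_forall_norm_sum_zpow_eq hv hA
  exact ⟨fun j => w ^ v j, fun j => hw.zpow, by simpa only [prod_zpow_zpow] using hwA⟩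

end Exponents

section MvGaussNorm

variable {K : Type*} [NontriviallyNormedField K] {n : ℕ} {ι : Type*}

theorem mvGaussNorm_le_iff {F : MvPolynomial (Fin n) K} {c : ℝ≥0} :
    mvGaussNorm F ≤ c ↔ ∀ d, ‖F.coeff d‖ ≤ c := by
  rw [mvGaussNorm, NNReal.coe_le_coe, Finset.sup_le_iff]
  refine forall_congr' fun d => ⟨fun h => ?_, fun h _ => h⟩
  by_cases hd : d ∈ F.support
  · exact h hd
  · rw [MvPolynomial.notMem_support_iff.1 hd, norm_zero]
    exact c.coe_nonneg

theorem mvGaussNorm_eq_sup_of_norm_coeff_eq [Fintype ι] {F : ι → MvPolynomial (Fin n) K}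
    {P : MvPolynomial (Fin n) K} (h : ∀ d, ‖P.coeff d‖ = ‖fun i => (F i).coeff d‖) :
    mvGaussNorm P = ((Finset.univ.sup fun i => (mvGaussNorm (F i)).toNNReal : ℝ≥0) : ℝ) := by
  rw [← Real.coe_toNNReal (mvGaussNorm P) (NNReal.coe_nonneg _), NNReal.coe_inj]
  refine eq_of_forall_ge_iff fun c => ?_
  simp only [Finset.sup_le_iff, Finset.mem_univ, true_imp_iff, Real.toNNReal_le_iff_le_coe,
    mvGaussNorm_le_iff, h, pi_norm_le_iff_of_nonneg c.coe_nonneg]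
  exact forall_comm

theorem finite_range_coeff [Finite ι] {σ R : Type*} [CommSemiring R] (F : ι → MvPolynomial σ R) :
    (Set.range fun d i => (F i).coeff d).Finite :=
  (Set.Finite.pi' fun i => Finsupp.finite_range (AddMonoidAlgebra.coeff (F i))).subset <| by
    rintro _ ⟨d, rfl⟩ i
    exact ⟨d, rfl⟩

end MvGaussNorm

theorem stmt17_general {K : Type*} [NontriviallyNormedField K] [IsUltrametricDist K]
    [IsSepClosed K] {n : ℕ} {ι κ α : Type*} [Fintype ι] [Fintype κ] [Finite α]
    (F : ι → MvPolynomial (Fin n) K) {u : ι → κ → ℤ} (hu : Function.Injective u)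
    (x : α → Fin n → K) :
    ∃ ζ : κ → Kˣ, (∀ j, IsOfFinOrder (ζ j)) ∧
      (∀ a, ‖MvPolynomial.eval (x a) (∑ i, MvPolynomial.C ((∏ j, ζ j ^ u i j : Kˣ) : K) * F i)‖
        = ‖fun i => MvPolynomial.eval (x a) (F i)‖) ∧
      mvGaussNorm (∑ i, MvPolynomial.C ((∏ j, ζ j ^ u i j : Kˣ) : K) * F i)
        = ((Finset.univ.sup fun i => (mvGaussNorm (F i)).toNNReal : ℝ≥0) : ℝ) := by
  obtain ⟨ζ, hζ, hnorm⟩ := exists_isOfFinOrder_forall_norm_sum_prod_zpow_eq hu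
    ((Set.finite_range fun a i => MvPolynomial.eval (x a) (F i)).union (finite_range_coeff F))
  refine ⟨ζ, hζ, fun a => ?_, mvGaussNorm_eq_sup_of_norm_coeff_eq fun d => ?_⟩
  · simpa only [map_sum, map_mul, MvPolynomial.eval_C] using hnorm _ (.inl (Set.mem_range_self a))
  · simpa only [MvPolynomial.coeff_sum, MvPolynomial.coeff_C_mul] using
      hnorm _ (.inr (Set.mem_range_self d))

/-- Let `F₁,…,F_m ∈ ℂ_p[X₁,…,X_n]`, `u₁,…,u_m ∈ ℤ^r` pairwise distinct, `η` a torsion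
point of `G_m^n` of order `N` and `G` a subset of `Gal(ℚ(η)/ℚ) ≅ (ZMod N)ˣ` (acting
by `η ↦ η^τ`) such that for every `τ ∈ G` some `F_i(τ(η)) ≠ 0`.  Then there is a
torsion point `ζ ∈ (μ_∞)^r` such that `F = ζ^{u₁}F₁ + ⋯ + ζ^{u_m}F_m` satisfies
`F(τ(η)) ≠ 0` for all `τ ∈ G` and `|F|_p = max_i |F_i|_p`. -/
theorem stmt17 {p : ℕ} (hp : p.Prime)
    {K : Type*} [NontriviallyNormedField K] [IsUltrametricDist K] [IsAlgClosed K]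
    [CompleteSpace K] (hpnorm : ‖(p : K)‖ = (p : ℝ)⁻¹)
    {n r m : ℕ} (F : Fin m → MvPolynomial (Fin n) K)
    (u : Fin m → (Fin r → ℤ)) (hu : Function.Injective u)
    {N : ℕ} (hN : 0 < N) (η : Fin n → Kˣ) (hη : orderOf η = N)
    (G : Finset (ZMod N)ˣ)
    (hG : ∀ τ ∈ G, ∃ i,
      MvPolynomial.eval (fun j => ((η j ^ ((τ : ZMod N).val) : Kˣ) : K)) (F i) ≠ 0) :
    ∃ ζ : Fin r → Kˣ, (∀ j, IsOfFinOrder (ζ j)) ∧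
      (∀ τ ∈ G,
        MvPolynomial.eval (fun j => ((η j ^ ((τ : ZMod N).val) : Kˣ) : K))
          (∑ i, MvPolynomial.C ((∏ j, ζ j ^ u i j : Kˣ) : K) * F i) ≠ 0) ∧
      mvGaussNorm (∑ i, MvPolynomial.C ((∏ j, ζ j ^ u i j : Kˣ) : K) * F i)
        = ((Finset.univ.sup fun i => ((mvGaussNorm (F i)).toNNReal) : NNReal) : ℝ) := by
  obtain ⟨ζ, hζ, heval, hgauss⟩ := stmt17_general F hu fun (τ : G) j => (η j ^ τ.1.1.val : Kˣ)
  refine ⟨ζ, hζ, fun τ hτ => norm_ne_zero_iff.1 ?_, hgauss⟩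
  exact (heval ⟨τ, hτ⟩).trans_ne (norm_ne_zero_iff.2 (Function.ne_iff.2 (hG τ hτ)))
end
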